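/- Let R be a quantum nilpotent algebra of dimension N over a field K, with eigenvalues λ_{kl} defined by h_k · x_l = λ_{kl} x_l for 1 ≤ l < k ≤ N, and let y_1, …, y_N be the canonical sequence of homogeneous prime elements of the chain of subalgebras R_1 ⊂ ⋯ ⊂ R_N = R. Let Ω : ℤ^N × ℤ^N → K^× be the unique group bicharacter with Ω(e_k, e_l) = 1 if k = l, Ω(e_k, e_l) = λ_{kl} if k > l, and Ω(e_k, e_l) = λ_{lk}^{−1} if k < l, and set ē_k := e_k + e_{p(k)} + e_{p²(k)} + ⋯ (with e_{−∞} := 0). Then the assignment Y_k^{±1} ↦ y_k^{±1} (1 ≤ k ≤ N) defines a K-algebra embedding of the quantum torus T_q associated to the N × N multiplicatively skewsymmetric matrix with entries q_{kl} := Ω(ē_k, ē_l) into the division ring of fractions Fract(R) of R. -/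

import Mathlib

/-!
The ordered monomials in the `x_k` form a basis in which, comparing exponents at the largest index
where they differ, leading terms multiply up to nonzero scalars.  In particular `R` is a Noetherian
domain.  By induction, using `y_k = y_{p(k)} x_k - c_k`, the leading exponent of `y_k` is `ē_k`.
Conjugation by the normal element `y_k` permutes the homogeneous primes of each smaller `R_l` and
preserves leading exponents, so it maps `y_l` to a scalar multiple of itself; comparing leading
coefficients of `y_k y_l` and `y_l y_k` identifies the scalar as `Ω(ē_k, ē_l)`.  The `ē_k` are
unitriangular, hence the ordered monomials in the `y_k` have distinct leading exponents and are
linearly independent; a common denominator extends this to Laurent monomials.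
-/

open scoped BigOperators

noncomputable section

universe u v

/-- The group of `K`-points of a split torus of rank `r`. -/
abbrev Torus (K : Type u) [Field K] (r : ℕ) : Type u := Fin r → Kˣ

section Core

variable (K : Type u) [Field K] {R : Type v} [Ring R] [Algebra K R] {r N : ℕ}

/-- `a` is an eigenvector of the torus action `act` with (integral) character `f`. -/
def IsEigenWith (act : Torus K r →* (R ≃ₐ[K] R)) (f : Fin r → ℤ) (a : R) : Prop :=
  ∀ ξ : Torus K r, act ξ a = ((∏ i, ξ i ^ f i : Kˣ) : K) • a

/-- The torus action `act` is rational: every element is a finite sum of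
eigenvectors whose eigenvalues are given by integral characters of the torus. -/
def IsRationalAction (act : Torus K r →* (R ≃ₐ[K] R)) : Prop :=
  ∀ a : R, ∃ (s : Finset (Fin r → ℤ)) (c : (Fin r → ℤ) → R),
    a = ∑ f ∈ s, c f ∧ ∀ f ∈ s, IsEigenWith K act f (c f)

/-- The ordered monomial `x 0 ^ m 0 * x 1 ^ m 1 * ⋯ * x (N-1) ^ m (N-1)`. -/
def ordMonomial (x : Fin N → R) (m : Fin N → ℕ) : R :=
  ((List.finRange N).map fun k => x k ^ m k).prod

/-- The ordered monomial in the reversed order of the generators. -/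
def revOrdMonomial (x : Fin N → R) (m : Fin N → ℕ) : R :=
  ((List.finRange N).reverse.map fun k => x k ^ m k).prod

/-- The subalgebra generated by the first `m` of the elements `x 0, …, x (N-1)`. -/
def Rsub (x : Fin N → R) (m : ℕ) : Subalgebra K R :=
  Algebra.adjoin K (x '' {l : Fin N | (l : ℕ) < m})

/-- The subalgebra generated by the elements `x l` with `m < l` (for the reversed order). -/
def RsubRev (x : Fin N → R) (m : ℕ) : Subalgebra K R :=
  Algebra.adjoin K (x '' {l : Fin N | m < (l : ℕ)})

/-- The skew derivation `δ_k : a ↦ x_k a − (h_k · a) x_k` attached to the `k`-th generator. -/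
def skewDelta (act : Torus K r →* (R ≃ₐ[K] R)) (x : Fin N → R) (h : Fin N → Torus K r)
    (k : Fin N) : R → R :=
  fun a => x k * a - act (h k) a * x k

end Core

/-- A quantum nilpotent algebra (CGL extension) of dimension `N`:  an iterated skew
polynomial extension `R = K[x_1][x_2; σ_2, δ_2]⋯[x_N; σ_N, δ_N]` equipped with a rational
action of a torus `H = (Kˣ)^r` by `K`-algebra automorphisms such that the `x_k` are
`H`-eigenvectors, each `δ_k` is a locally nilpotent `σ_k`-derivation of the subalgebra
generated by `x_1, …, x_{k-1}`, and each `σ_k` is given by the action of a torus element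
`h_k` whose eigenvalue `λ_k` on `x_k` is not a root of unity.  The iterated skew polynomial
presentation is encoded by the generation, linear independence of ordered monomials
(PBW basis) and the skew commutation conditions. -/
structure QNA (K : Type u) [Field K] (R : Type v) [Ring R] [Algebra K R] (N r : ℕ) where
  x : Fin N → R
  act : Torus K r →* (R ≃ₐ[K] R)
  h : Fin N → Torus K r
  lam : Fin N → K
  rational : IsRationalAction K act
  gen : Algebra.adjoin K (Set.range x) = ⊤
  pbw : LinearIndependent K (ordMonomial (R := R) x)
  eigenvec : ∀ k : Fin N, ∃ f : Fin r → ℤ, IsEigenWith K act f (x k)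
  stable : ∀ k : Fin N, ∀ a ∈ Rsub K x (k : ℕ), skewDelta K act x h k a ∈ Rsub K x (k : ℕ)
  locnil : ∀ k : Fin N, ∀ a ∈ Rsub K x (k : ℕ), ∃ n : ℕ, (skewDelta K act x h k)^[n] a = 0
  hx : ∀ k, act (h k) (x k) = lam k • x k
  lam_not_root : ∀ k, ∀ n : ℕ, n ≠ 0 → lam k ^ n ≠ 1

/-- A symmetric quantum nilpotent algebra: a quantum nilpotent algebra which admits an
iterated skew polynomial presentation, satisfying the same axioms, also for the reversed
order `x_N, x_{N-1}, …, x_1` of the generators, with respect to torus elements `h*_k`. -/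
structure SymQNA (K : Type u) [Field K] (R : Type v) [Ring R] [Algebra K R] (N r : ℕ)
    extends QNA K R N r where
  hstar : Fin N → Torus K r
  lamstar : Fin N → K
  pbwRev : LinearIndependent K (revOrdMonomial (R := R) x)
  stableRev : ∀ k : Fin N, ∀ a ∈ RsubRev K x (k : ℕ),
    skewDelta K act x hstar k a ∈ RsubRev K x (k : ℕ)
  locnilRev : ∀ k : Fin N, ∀ a ∈ RsubRev K x (k : ℕ),
    ∃ n : ℕ, (skewDelta K act x hstar k)^[n] a = 0
  hxstar : ∀ k, act (hstar k) (x k) = lamstar k • x k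
  lamstar_not_root : ∀ k, ∀ n : ℕ, n ≠ 0 → lamstar k ^ n ≠ 1

section Prime

variable (K : Type u) [Field K] {R : Type v} [Ring R] [Algebra K R] {r N : ℕ}

/-- The skew derivation `δ_k` of the `k`-th step of the presentation vanishes. -/
def deltaZero (Q : QNA K R N r) (k : Fin N) : Prop :=
  ∀ a ∈ Rsub K Q.x (k : ℕ), skewDelta K Q.act Q.x Q.h k a = 0

/-- `p` is a prime element of the subalgebra `A`:  `p` is a nonzero noninvertible normal
element of `A` (`pA = Ap`) such that `A/Ap` is a domain. -/
def IsPrimeIn (A : Subalgebra K R) (p : R) : Prop :=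
  p ∈ A ∧ p ≠ 0 ∧ (¬ ∃ u ∈ A, p * u = 1 ∧ u * p = 1) ∧
  (∀ a ∈ A, ∃ b ∈ A, a * p = p * b) ∧
  (∀ a ∈ A, ∃ b ∈ A, p * a = b * p) ∧
  (∀ a ∈ A, ∀ b ∈ A, (∃ d ∈ A, a * b = p * d) → (∃ d ∈ A, a = p * d) ∨ (∃ d ∈ A, b = p * d))

/-- The predecessor function of the level sets of `η`:  `p(k)` is the largest `l < k`
with `η l = η k`, and `⊥` (i.e. `−∞`) if there is no such `l`. -/
def predIdx {α : Type*} [DecidableEq α] (η : Fin N → α) (k : Fin N) : WithBot (Fin N) :=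
  (Finset.univ.filter fun l => l < k ∧ η l = η k).max

/-- The successor function of the level sets of `η`:  `s(k)` is the smallest `l > k`
with `η l = η k`, and `⊤` (i.e. `+∞`) if there is no such `l`. -/
def succIdx {α : Type*} [DecidableEq α] (η : Fin N → α) (k : Fin N) : WithTop (Fin N) :=
  (Finset.univ.filter fun l => k < l ∧ η l = η k).min

/-- `(η, c, y)` is a sequence of homogeneous prime elements for the quantum nilpotent
algebra `Q` in the sense of the prime element theorem:  `y` is defined by the recursion
`y_k = y_{p(k)} x_k − c_k` (if `δ_k ≠ 0`; `y_k = x_k` if `δ_k = 0`), the `y_k` are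
`H`-eigenvectors, and for every `k` the homogeneous prime elements of the subalgebra
`R_k` generated by `x_1, …, x_k` are precisely the nonzero scalar multiples of the
`y_l` with `l ≤ k` and `s(l) > k`. -/
structure IsPrimeSeq (Q : QNA K R N r) (η : Fin N → ℤ) (c : Fin N → R) (y : Fin N → R) :
    Prop where
  c_mem : ∀ k : Fin N, ¬ deltaZero K Q k → c k ∈ Rsub K Q.x (k : ℕ)
  rec_delta_zero : ∀ k : Fin N, deltaZero K Q k → y k = Q.x k
  rec_delta_ne : ∀ k : Fin N, ¬ deltaZero K Q k →
    y k = (WithBot.recBotCoe (1 : R) (fun l => y l) (predIdx η k)) * Q.x k - c k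
  homog : ∀ k : Fin N, ∃ f : Fin r → ℤ, IsEigenWith K Q.act f (y k)
  prime_iff : ∀ k : Fin N, ∀ u : R,
    (IsPrimeIn K (Rsub K Q.x ((k : ℕ) + 1)) u ∧ ∃ f : Fin r → ℤ, IsEigenWith K Q.act f u) ↔
    (∃ l : Fin N, l ≤ k ∧ (∀ l' : Fin N, l < l' → l' ≤ k → η l' ≠ η l) ∧
      ∃ t : Kˣ, u = (t : K) • y l)

/-- The vector `ē_k = e_k + e_{p(k)} + e_{p²(k)} + ⋯ ∈ ℤ^N`. -/
def ebar (η : Fin N → ℤ) (k : Fin N) : Fin N → ℤ :=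
  fun l => if l ≤ k ∧ η l = η k then 1 else 0

/-- The multiplicatively skewsymmetric matrix of eigenvalues:  `1` on the diagonal,
`λ_{kl}` below it and `λ_{lk}⁻¹` above it. -/
def omegaEntry (lam2 : Fin N → Fin N → Kˣ) (k l : Fin N) : Kˣ :=
  if k = l then 1 else if l < k then lam2 k l else (lam2 l k)⁻¹

/-- The unique group bicharacter `Ω : ℤ^N × ℤ^N → Kˣ` with `Ω(e_k, e_l)` equal to `1`,
`λ_{kl}`, `λ_{lk}⁻¹` according as `k = l`, `k > l`, `k < l`. -/
def Omega (lam2 : Fin N → Fin N → Kˣ) (f g : Fin N → ℤ) : Kˣ :=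
  ∏ k, ∏ l, (omegaEntry K lam2 k l) ^ (f k * g l)

/-- The set of exchangeable indices: those `k` with `s(k) ≠ +∞`. -/
def exSet (η : Fin N → ℤ) : Finset (Fin N) :=
  Finset.univ.filter fun k => ∃ l, k < l ∧ η l = η k

/-- Condition (A): `K` contains square roots of the scalars `λ_{kl}` such that the
subgroup of `Kˣ` generated by all of them contains no elements of order 2. -/
def CondA (lam2 : Fin N → Fin N → Kˣ) : Prop :=
  ∃ sq : Fin N → Fin N → Kˣ, (∀ k l : Fin N, l < k → sq k l ^ 2 = lam2 k l) ∧
    ∀ g ∈ Subgroup.closure {u : Kˣ | ∃ k l : Fin N, l < k ∧ u = sq k l}, g ^ 2 = 1 → g = 1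

/-- Condition (B): there exist positive integers `d_n`, `n ∈ range η`, such that
`(λ*_k)^{d_{η(l)}} = (λ*_l)^{d_{η(k)}}` for all exchangeable `k, l`. -/
def CondB (η : Fin N → ℤ) (lamstar : Fin N → K) : Prop :=
  ∃ d : ℤ → ℕ, (∀ n ∈ Set.range η, 0 < d n) ∧
    ∀ k ∈ exSet η, ∀ l ∈ exSet η, lamstar k ^ d (η l) = lamstar l ^ d (η k)

/-- The defining conditions for the exchange matrix `B̃ ∈ M_{N×ex}(ℤ)`:  columns indexed
outside `ex` vanish; `Ω(Σ_l b_{lk} ē_l, ē_n)` equals `λ*_n` for `k = n` and `1` otherwise;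
and the products `y_1^{b_{1k}} ⋯ y_N^{b_{Nk}}` are fixed under `H`, i.e. the characters
`χ_{y_l}` of the `y_l` satisfy `Σ_l b_{lk} χ_{y_l} = 0`. -/
def IsExchangeMatrix (lam2 : Fin N → Fin N → Kˣ) (η : Fin N → ℤ) (lamstar : Fin N → K)
    (chiy : Fin N → Fin r → ℤ) (B : Fin N → Fin N → ℤ) : Prop :=
  (∀ k : Fin N, k ∉ exSet η → ∀ l, B l k = 0) ∧
  (∀ k ∈ exSet η, ∀ n : Fin N,
    ((Omega K lam2 (fun j => ∑ l, B l k * ebar η l j) (ebar η n) : Kˣ) : K) =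
      (if k = n then lamstar n else 1)) ∧
  (∀ k ∈ exSet η, ∀ i : Fin r, (∑ l, B l k * chiy l i) = 0)

/-- `ι : R →ₐ[K] D` realizes the division ring `D` as the division ring of fractions
`Fract R`:  `ι` is injective and every element of `D` is a right fraction `ι(a) ι(b)⁻¹`. -/
def IsFractionEmb {D : Type v} [DivisionRing D] [Algebra K D] (ι : R →ₐ[K] D) : Prop :=
  Function.Injective ι ∧ ∀ d : D, ∃ a b : R, b ≠ 0 ∧ d * ι b = ι a

end Prime

section LeadingTerm

variable {ι K M : Type*} [LinearOrder ι] [Field K] [AddCommGroup M] [Module K M]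

/-- With respect to a basis `b` with totally ordered index set, `a` is `c • b m` plus a
combination of smaller basis vectors.  The coefficient `c` is allowed to vanish. -/
def HasLeadingTerm (b : Module.Basis ι K M) (a : M) (m : ι) (c : K) : Prop :=
  a - c • b m ∈ Submodule.span K (b '' Set.Iio m)

variable {b : Module.Basis ι K M} {a a' : M} {m n : ι} {c d : K}

theorem hasLeadingTerm_basis (b : Module.Basis ι K M) (m : ι) : HasLeadingTerm b (b m) m 1 := by
  simp [HasLeadingTerm]

theorem hasLeadingTerm_iff :
    HasLeadingTerm b a m c ↔ b.repr a m = c ∧ ∀ n, m < n → b.repr a n = 0 := by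
  simp only [HasLeadingTerm, b.mem_span_image, Set.subset_def, Finset.mem_coe,
    Finsupp.mem_support_iff, map_sub, map_smul, Module.Basis.repr_self, Finsupp.sub_apply,
    Finsupp.smul_single, smul_eq_mul, mul_one, Set.mem_Iio, ← not_le, not_imp_not]
  constructor
  · intro h
    refine ⟨by simpa [sub_eq_zero] using h m le_rfl, fun n hn => ?_⟩
    simpa [Finsupp.single_eq_of_ne (not_le.1 hn).ne'] using h n (not_le.1 hn).le
  · rintro ⟨hm, hn⟩ n hmn
    rcases hmn.eq_or_lt with rfl | hlt
    · simp [hm]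
    · simp [hn n hlt.not_ge, hlt.ne']

namespace HasLeadingTerm

theorem repr_eq (h : HasLeadingTerm b a m c) : b.repr a m = c := (hasLeadingTerm_iff.1 h).1

theorem repr_eq_zero (h : HasLeadingTerm b a m c) (hn : m < n) : b.repr a n = 0 :=
  (hasLeadingTerm_iff.1 h).2 n hn

theorem ne_zero (h : HasLeadingTerm b a m c) (hc : c ≠ 0) : a ≠ 0 := by
  rintro rfl
  exact hc (by simpa using h.repr_eq.symm)

theorem exponent_le (h : HasLeadingTerm b a m c) (hc : c ≠ 0) (h' : HasLeadingTerm b a n d) :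
    m ≤ n :=
  not_lt.1 fun hlt => hc (h.repr_eq.symm.trans (h'.repr_eq_zero hlt))

theorem exponent_unique (h : HasLeadingTerm b a m c) (hc : c ≠ 0) (h' : HasLeadingTerm b a n d)
    (hd : d ≠ 0) : m = n :=
  (h.exponent_le hc h').antisymm (h'.exponent_le hd h)

theorem coeff_unique (h : HasLeadingTerm b a m c) (h' : HasLeadingTerm b a m d) : c = d :=
  h.repr_eq.symm.trans h'.repr_eq

theorem smul (t : K) (h : HasLeadingTerm b a m c) : HasLeadingTerm b (t • a) m (t * c) := by
  simpa only [HasLeadingTerm, smul_sub, mul_smul] using Submodule.smul_mem _ t h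

theorem add_lower (h : HasLeadingTerm b a m c) (ha' : a' ∈ Submodule.span K (b '' Set.Iio m)) :
    HasLeadingTerm b (a + a') m c := by
  simpa only [HasLeadingTerm, add_sub_right_comm] using add_mem h ha'

theorem mem_span_Iic (h : HasLeadingTerm b a m c) : a ∈ Submodule.span K (b '' Set.Iic m) := by
  rw [← sub_add_cancel a (c • b m)]
  exact add_mem (Submodule.span_mono (Set.image_mono Set.Iio_subset_Iic_self) h)
    (Submodule.smul_mem _ _ (Submodule.subset_span ⟨m, le_rfl, rfl⟩))

theorem sub_smul_mem (h : HasLeadingTerm b a m c) (hc : c ≠ 0) (h' : HasLeadingTerm b a' m d) :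
    a' - (d / c) • a ∈ Submodule.span K (b '' Set.Iio m) := by
  have hsplit : a' - (d / c) • a = (a' - d • b m) - (d / c) • (a - c • b m) := by
    rw [smul_sub, smul_smul, div_mul_cancel₀ _ hc]
    abel
  rw [hsplit]
  exact sub_mem h' (Submodule.smul_mem _ _ h)

end HasLeadingTerm

theorem exists_hasLeadingTerm (b : Module.Basis ι K M) (ha : a ≠ 0) :
    ∃ m c, c ≠ 0 ∧ HasLeadingTerm b a m c := by
  have hne : (b.repr a).support.Nonempty :=
    Finsupp.support_nonempty_iff.2 (by simpa using ha)
  set m := (b.repr a).support.max' hne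
  refine ⟨m, b.repr a m, Finsupp.mem_support_iff.1 (Finset.max'_mem _ hne),
    hasLeadingTerm_iff.2 ⟨rfl, fun n hn => ?_⟩⟩
  by_contra h
  exact hn.not_ge (Finset.le_max' _ n (Finsupp.mem_support_iff.2 h))

theorem HasLeadingTerm.exponent_mem {s : Set ι} (h : HasLeadingTerm b a m c) (hc : c ≠ 0)
    (ha : a ∈ Submodule.span K (b '' s)) : m ∈ s :=
  b.mem_span_image.1 ha (by simpa [h.repr_eq] using hc)

theorem exists_hasLeadingTerm_lt (ha : a ∈ Submodule.span K (b '' Set.Iio m)) (h0 : a ≠ 0) :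
    ∃ n < m, ∃ c, c ≠ 0 ∧ HasLeadingTerm b a n c := by
  obtain ⟨n, c, hc, hn⟩ := exists_hasLeadingTerm b h0
  exact ⟨n, hn.exponent_mem hc ha, c, hc, hn⟩

/-- The set of leading exponents of the nonzero elements of `s`. -/
def leadingExponents (b : Module.Basis ι K M) (s : Set M) : Set ι :=
  {m | ∃ a ∈ s, ∃ c, c ≠ 0 ∧ HasLeadingTerm b a m c}

theorem exists_minimal_leadingExponents [WellFoundedLT ι] (b : Module.Basis ι K M) {s : Set M}
    (ha : a ∈ s) (h0 : a ≠ 0) : ∃ m, Minimal (· ∈ leadingExponents b s) m := by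
  obtain ⟨m, c, hc, hm⟩ := exists_hasLeadingTerm b h0
  exact exists_minimal_of_wellFoundedLT _ ⟨m, a, ha, c, hc, hm⟩

theorem linearIndependent_of_hasLeadingTerm {κ : Type*} {w : κ → M} {e : κ → ι} {c : κ → K}
    (he : Function.Injective e) (hc : ∀ j, c j ≠ 0)
    (hw : ∀ j, HasLeadingTerm b (w j) (e j) (c j)) : LinearIndependent K w := by
  classical
  rw [linearIndependent_iff']
  intro s g hg
  by_contra! hne
  obtain ⟨j, hj, hjmax⟩ := (s.filter (g · ≠ 0)).exists_max_image e
    (by simpa [Finset.filter_nonempty_iff] using hne)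
  obtain ⟨hjs, hgj⟩ := Finset.mem_filter.1 hj
  have hcoeff : ∑ i ∈ s, g i * b.repr (w i) (e j) = 0 := by
    simpa [Finsupp.finsetSum_apply] using congrArg (fun a => b.repr a (e j)) hg
  rw [Finset.sum_eq_single_of_mem j hjs, (hw j).repr_eq] at hcoeff
  · exact mul_ne_zero hgj (hc j) hcoeff
  · intro i hi hij
    by_cases hgi : g i = 0
    · rw [hgi, zero_mul]
    · have hlt := (hjmax i (Finset.mem_filter.2 ⟨hi, hgi⟩)).lt_of_ne (he.ne hij)
      rw [(hw i).repr_eq_zero hlt, mul_zero]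

end LeadingTerm

section MonomialBasis

variable {ι K R : Type*} [LinearOrder ι] [AddCommMonoid ι] [Field K] [Ring R] [Algebra K R]

/-- A basis of an algebra, indexed by an ordered monoid of exponents, in which the product of
two basis vectors is, up to smaller terms, a nonzero multiple of the basis vector with the sum of
their exponents; the multiples are recorded by `q`. -/
def IsMonomialBasis (b : Module.Basis ι K R) (q : ι → ι → Kˣ) : Prop :=
  ∀ m n, HasLeadingTerm b (b m * b n) (m + n) (q m n)

variable {b : Module.Basis ι K R} {q : ι → ι → Kˣ}

namespace IsMonomialBasis

theorem op (hb : IsMonomialBasis b q) :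
    IsMonomialBasis (b.map (MulOpposite.opLinearEquiv K)) fun m n => q n m := by
  intro m n
  have himage : b.map (MulOpposite.opLinearEquiv K) '' Set.Iio (m + n) =
      MulOpposite.op '' (b '' Set.Iio (n + m)) := by
    rw [Set.image_image, add_comm n m]
    rfl
  have h := Submodule.mem_map_of_mem (f := (MulOpposite.opLinearEquiv K).toLinearMap) (hb n m)
  simpa [HasLeadingTerm, himage, Submodule.map_span, add_comm n m] using h

variable [IsOrderedCancelAddMonoid ι]

theorem span_Iio_mul_span_Iic_le (hb : IsMonomialBasis b q) (m n : ι) :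
    Submodule.span K (b '' Set.Iio m) * Submodule.span K (b '' Set.Iic n) ≤
      Submodule.span K (b '' Set.Iio (m + n)) := by
  rw [Submodule.span_mul_span, Submodule.span_le]
  rintro _ ⟨_, ⟨i, hi, rfl⟩, _, ⟨j, hj, rfl⟩, rfl⟩
  exact Submodule.span_mono
    (Set.image_mono (Set.Iic_subset_Iio.2 (add_lt_add_of_lt_of_le hi hj))) (hb i j).mem_span_Iic

theorem span_Iic_mul_span_Iio_le (hb : IsMonomialBasis b q) (m n : ι) :
    Submodule.span K (b '' Set.Iic m) * Submodule.span K (b '' Set.Iio n) ≤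
      Submodule.span K (b '' Set.Iio (m + n)) := by
  rw [Submodule.span_mul_span, Submodule.span_le]
  rintro _ ⟨_, ⟨i, hi, rfl⟩, _, ⟨j, hj, rfl⟩, rfl⟩
  exact Submodule.span_mono
    (Set.image_mono (Set.Iic_subset_Iio.2 (add_lt_add_of_le_of_lt hi hj))) (hb i j).mem_span_Iic

theorem hasLeadingTerm_mul (hb : IsMonomialBasis b q) {a a' : R} {m n : ι} {c d : K}
    (ha : HasLeadingTerm b a m c) (ha' : HasLeadingTerm b a' n d) :
    HasLeadingTerm b (a * a') (m + n) (c * d * q m n) := by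
  have hsplit : a * a' - (c * d * q m n) • b (m + n) =
      (a - c • b m) * a' + c • (b m * (a' - d • b n)) +
        (c * d) • (b m * b n - (q m n : K) • b (m + n)) := by
    simp only [sub_mul, mul_sub, smul_sub, smul_mul_assoc, mul_smul_comm, mul_smul]
    abel
  rw [HasLeadingTerm, hsplit]
  refine add_mem (add_mem ?_ (Submodule.smul_mem _ _ ?_)) (Submodule.smul_mem _ _ (hb m n))
  · exact hb.span_Iio_mul_span_Iic_le m n (Submodule.mul_mem_mul ha ha'.mem_span_Iic)
  · exact hb.span_Iic_mul_span_Iio_le m n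
      (Submodule.mul_mem_mul (hasLeadingTerm_basis b m).mem_span_Iic ha')

theorem exponent_eq_of_mul_eq_mul (hb : IsMonomialBasis b q) {u a a' : R} {k m n : ι} {e c d : K}
    (hu : HasLeadingTerm b u k e) (he : e ≠ 0) (ha : HasLeadingTerm b a m c) (hc : c ≠ 0)
    (ha' : HasLeadingTerm b a' n d) (hd : d ≠ 0) (h : u * a = a' * u) : m = n := by
  have hleft := hb.hasLeadingTerm_mul hu ha
  rw [h] at hleft
  have hright := hb.hasLeadingTerm_mul ha' hu
  rw [add_comm n k] at hright
  exact add_left_cancel (hleft.exponent_unique (by simp [he, hc]) hright (by simp [he, hd]))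

theorem isDomain (hb : IsMonomialBasis b q) : IsDomain R := by
  have : Nontrivial R := ⟨b 0, 0, b.ne_zero 0⟩
  have : NoZeroDivisors R := by
    refine ⟨fun {a a'} h => ?_⟩
    by_contra! hne
    obtain ⟨m, c, hc, ha⟩ := exists_hasLeadingTerm b hne.1
    obtain ⟨n, d, hd, ha'⟩ := exists_hasLeadingTerm b hne.2
    exact (hb.hasLeadingTerm_mul ha ha').ne_zero (mul_ne_zero (mul_ne_zero hc hd) (q m n).ne_zero) h
  exact NoZeroDivisors.to_isDomain R

/-- Gordan's argument: along a strictly increasing chain of ideals, the minimal leading exponents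
of the successive differences could not divide one another. -/
theorem isNoetherianRing (hb : IsMonomialBasis b q) (hwf : WellFoundedLT ι)
    (hdvd : WellQuasiOrdered fun m n : ι => ∃ k, n = k + m) : IsNoetherianRing R := by
  rw [isNoetherianRing_iff, isNoetherian_iff, RelEmbedding.wellFounded_iff_isEmpty]
  refine ⟨fun I => ?_⟩
  have hI : StrictMono I := fun i j hij => I.map_rel_iff.2 hij
  have hmin (i : ℕ) : ∃ m, Minimal (· ∈ leadingExponents b (I (i + 1) \ I i)) m := by
    obtain ⟨a, ha, hai⟩ := SetLike.exists_of_lt (hI (Nat.lt_succ_self i))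
    exact exists_minimal_leadingExponents b ⟨ha, hai⟩ (ne_of_mem_of_not_mem (zero_mem _) hai).symm
  choose m hm using hmin
  obtain ⟨i, j, hij, k, hk⟩ := hdvd m
  obtain ⟨a, ⟨ha, -⟩, c, hc, hac⟩ := (hm i).prop
  obtain ⟨a', ⟨ha', haj'⟩, d, -, had'⟩ := (hm j).prop
  have hlead : HasLeadingTerm b (b k * a) (m j) _ :=
    hk ▸ hb.hasLeadingTerm_mul (hasLeadingTerm_basis b k) hac
  have hdiff := hlead.sub_smul_mem (by simp [hc]) had'
  set z := (d / (1 * c * q k (m i))) • (b k * a)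
  have hz : z ∈ I j := Submodule.smul_of_tower_mem _ _
    ((I j).smul_mem _ (hI.monotone (Nat.succ_le_of_lt hij) ha))
  have hnot : a' - z ∉ I j := fun h => haj' (by simpa using add_mem h hz)
  obtain ⟨n, hn, c', hc', hlast⟩ :=
    exists_hasLeadingTerm_lt hdiff (ne_of_mem_of_not_mem (zero_mem _) hnot).symm
  exact (hm j).not_prop_of_lt hn
    ⟨_, ⟨sub_mem ha' (hI.monotone j.le_succ hz), hnot⟩, c', hc', hlast⟩

end IsMonomialBasis

end MonomialBasis

section Fractions

open scoped nonZeroDivisors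

variable {K : Type u} [Field K] {R : Type v} [Ring R] [IsDomain R] [Algebra K R]

-- Localizing `Rᵐᵒᵖ` turns the left fractions of `OreLocalization` into right fractions of `R`.
theorem exists_isFractionEmb [IsNoetherianRing Rᵐᵒᵖ] :
    ∃ (D : Type v) (_ : DivisionRing D) (_ : Algebra K D) (ι : R →ₐ[K] D), IsFractionEmb K ι := by
  obtain ⟨_⟩ := nonempty_oreSet_of_strongRankCondition (R := Rᵐᵒᵖ)
  let num : Rᵐᵒᵖ →ₐ[K] OreLocalization Rᵐᵒᵖ⁰ Rᵐᵒᵖ :=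
    { OreLocalization.numeratorRingHom with commutes' := fun _ => rfl }
  have hnum : Function.Injective num := OreLocalization.numeratorHom_inj inf_le_left
  have hfrac (z : OreLocalization Rᵐᵒᵖ⁰ Rᵐᵒᵖ) : ∃ a s : Rᵐᵒᵖ, s ≠ 0 ∧ num s * z = num a := by
    induction z with
    | _ a s =>
      refine ⟨a, s, nonZeroDivisors.ne_zero s.2, ?_⟩
      exact OreLocalization.smul_cancel
  refine ⟨(OreLocalization Rᵐᵒᵖ⁰ Rᵐᵒᵖ)ᵐᵒᵖ, inferInstance, inferInstance,
    num.op.comp (AlgEquiv.opOp K R), ?_, fun d => ?_⟩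
  · exact (MulOpposite.op_injective.comp (hnum.comp MulOpposite.op_injective))
  · obtain ⟨a, s, hs, h⟩ := hfrac d.unop
    exact ⟨a.unop, s.unop, by simpa using hs, congrArg MulOpposite.op h⟩

end Fractions

section QuasiCommute

/-- `a` and `b` quasi-commute: they commute up to an invertible scalar. -/
def QuasiCommute (K : Type*) {D : Type*} [CommSemiring K] [Semiring D] [Algebra K D]
    (a b : D) : Prop :=
  ∃ s : Kˣ, a * b = s • (b * a)

namespace QuasiCommute

variable {K D : Type*} [CommSemiring K] [Semiring D] [Algebra K D] {a b c : D}

theorem symm (h : QuasiCommute K a b) : QuasiCommute K b a := by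
  obtain ⟨s, h⟩ := h
  exact ⟨s⁻¹, by rw [h, inv_smul_smul]⟩

theorem one_right (a : D) : QuasiCommute K a 1 := ⟨1, by simp⟩

theorem mul_right (hb : QuasiCommute K a b) (hc : QuasiCommute K a c) :
    QuasiCommute K a (b * c) := by
  obtain ⟨s, hb⟩ := hb
  obtain ⟨t, hc⟩ := hc
  refine ⟨s * t, ?_⟩
  rw [← mul_assoc, hb, smul_mul_assoc, mul_assoc, hc, mul_smul_comm, mul_smul, mul_assoc]

theorem list_prod_right {L : List D} (h : ∀ b ∈ L, QuasiCommute K a b) :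
    QuasiCommute K a L.prod := by
  induction L with
  | nil => exact one_right a
  | cons b L ih =>
    rw [List.forall_mem_cons] at h
    rw [List.prod_cons]
    exact h.1.mul_right (ih h.2)

end QuasiCommute

variable {K : Type*} [Field K] {D : Type*} [DivisionRing D] [Algebra K D] {N : ℕ}

theorem QuasiCommute.zpow_right {a b : D} (h : QuasiCommute K a b) (n : ℤ) :
    QuasiCommute K a (b ^ n) := by
  obtain ⟨s, h⟩ := h
  refine ⟨s ^ n, ?_⟩
  have hconj : SemiconjBy a b (s • b) := by rw [SemiconjBy, h, smul_mul_assoc]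
  have hpow : (s • b) ^ n = s ^ n • b ^ n := by
    simp only [Units.smul_def, Algebra.smul_def, Units.val_zpow_eq_zpow_val, map_zpow₀,
      (show Commute (algebraMap K D s) b from Algebra.commutes _ _).mul_zpow]
  rw [(hconj.zpow_right₀ n).eq, hpow, smul_mul_assoc]

/-- The ordered Laurent monomial `Y 0 ^ f 0 * ⋯ * Y (N-1) ^ f (N-1)`. -/
def laurentMonomial (Y : Fin N → D) (f : Fin N → ℤ) : D :=
  ((List.finRange N).map fun k => Y k ^ f k).prod

theorem laurentMonomial_natCast (Y : Fin N → D) (m : Fin N → ℕ) :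
    laurentMonomial Y (fun k => m k) = ordMonomial Y m := by
  simp only [laurentMonomial, ordMonomial, zpow_natCast]

variable {Y : Fin N → D}

theorem exists_list_prod_zpow_mul (hY : ∀ k, Y k ≠ 0) (hq : ∀ k l, QuasiCommute K (Y k) (Y l))
    (f g : Fin N → ℤ) (L : List (Fin N)) :
    ∃ s : Kˣ, (L.map fun k => Y k ^ f k).prod * (L.map fun k => Y k ^ g k).prod =
      s • (L.map fun k => Y k ^ (f k + g k)).prod := by
  induction L with
  | nil => exact ⟨1, by simp⟩
  | cons k L ih =>
    simp only [List.map_cons, List.prod_cons]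
    set F := (L.map fun k => Y k ^ f k).prod
    set G := (L.map fun k => Y k ^ g k).prod
    obtain ⟨s, hs⟩ := ih
    obtain ⟨t, ht⟩ : QuasiCommute K F (Y k ^ g k) := by
      refine (QuasiCommute.list_prod_right ?_).symm
      simp only [List.forall_mem_map]
      exact fun l _ => (((hq k l).zpow_right _).symm.zpow_right _).symm
    refine ⟨t * s, ?_⟩
    calc Y k ^ f k * F * (Y k ^ g k * G) = Y k ^ f k * (F * Y k ^ g k) * G := by
          simp only [mul_assoc]
      _ = t • (Y k ^ f k * Y k ^ g k * (F * G)) := by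
          simp only [ht, mul_smul_comm, smul_mul_assoc, mul_assoc]
      _ = (t * s) • (Y k ^ (f k + g k) * (L.map fun k => Y k ^ (f k + g k)).prod) := by
          rw [hs, ← zpow_add₀ (hY k), mul_smul_comm, mul_smul]

-- Multiplication by a common Laurent monomial turns finitely many Laurent monomials into scalar
-- multiples of ordinary monomials.
theorem linearIndependent_laurentMonomial (hY : ∀ k, Y k ≠ 0)
    (hq : ∀ k l, QuasiCommute K (Y k) (Y l)) (hli : LinearIndependent K (ordMonomial Y)) :
    LinearIndependent K (laurentMonomial Y) := by
  rw [linearIndependent_iff_finset_linearIndependent]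
  intro s
  obtain ⟨m, hm⟩ := s.bddBelow
  choose t ht using fun f => exists_list_prod_zpow_mul hY hq (-m) f (List.finRange N)
  let e (f : s) : Fin N → ℕ := fun k => (-m k + f.1 k).toNat
  have he (f : s) : (fun k => (e f k : ℤ)) = -m + f := by
    funext k
    have hle : m k ≤ f.1 k := hm f.2 k
    simp only [e, Pi.add_apply, Pi.neg_apply]
    omega
  have hinj : Function.Injective e := fun f g h =>
    Subtype.ext (add_left_cancel ((he f).symm.trans (h ▸ he g)))
  refine LinearIndependent.of_comp (LinearMap.mulLeft K (laurentMonomial Y (-m))) ?_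
  suffices hmul : (fun f : s => laurentMonomial Y (-m) * laurentMonomial Y f) =
      (fun f : s => t f) • (ordMonomial Y ∘ e) by
    have hscaled := (hli.comp e hinj).units_smul fun f : s => t f
    rwa [← hmul] at hscaled
  funext f
  refine (ht f).trans (congrArg (t f • ·) ?_)
  rw [Function.comp_apply, ← laurentMonomial_natCast, he]
  rfl

end QuasiCommute

section Adjoin

variable {K R : Type*} [CommSemiring K] [Semiring R] [Algebra K R]

theorem exists_mul_eq_mul_of_mem_adjoin {s : Set R} {p : R}
    (h : ∀ a ∈ s, ∃ b ∈ Algebra.adjoin K s, a * p = p * b) {a : R} (ha : a ∈ Algebra.adjoin K s) :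
    ∃ b ∈ Algebra.adjoin K s, a * p = p * b := by
  induction ha using Algebra.adjoin_induction with
  | mem a ha => exact h a ha
  | algebraMap c => exact ⟨_, algebraMap_mem _ c, Algebra.commutes c p⟩
  | add a a' _ _ ih ih' =>
    obtain ⟨b, hb, e⟩ := ih
    obtain ⟨b', hb', e'⟩ := ih'
    exact ⟨b + b', add_mem hb hb', by rw [add_mul, mul_add, e, e']⟩
  | mul a a' _ _ ih ih' =>
    obtain ⟨b, hb, e⟩ := ih
    obtain ⟨b', hb', e'⟩ := ih'
    exact ⟨b * b', mul_mem hb hb', by rw [mul_assoc, e', ← mul_assoc, e, mul_assoc]⟩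

theorem exists_mul_eq_mul_of_mem_adjoin' {s : Set R} {p : R}
    (h : ∀ a ∈ s, ∃ b ∈ Algebra.adjoin K s, p * a = b * p) {a : R} (ha : a ∈ Algebra.adjoin K s) :
    ∃ b ∈ Algebra.adjoin K s, p * a = b * p := by
  induction ha using Algebra.adjoin_induction with
  | mem a ha => exact h a ha
  | algebraMap c => exact ⟨_, algebraMap_mem _ c, (Algebra.commutes c p).symm⟩
  | add a a' _ _ ih ih' =>
    obtain ⟨b, hb, e⟩ := ih
    obtain ⟨b', hb', e'⟩ := ih'
    exact ⟨b + b', add_mem hb hb', by rw [add_mul, mul_add, e, e']⟩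
  | mul a a' _ _ ih ih' =>
    obtain ⟨b, hb, e⟩ := ih
    obtain ⟨b', hb', e'⟩ := ih'
    exact ⟨b * b', mul_mem hb hb', by rw [← mul_assoc, e, mul_assoc, e', mul_assoc]⟩

end Adjoin

section PowSpan

open scoped Pointwise

variable {K R : Type*} [CommRing K] [Ring R] [Algebra K R]

/-- The left `A`-submodule spanned by the powers of `x` with exponents in `s`. -/
def powSpan (A : Subalgebra K R) (x : R) (s : Set ℕ) : Submodule A R :=
  Submodule.span A ((x ^ ·) '' s)

variable {A : Subalgebra K R} {x : R} {σ : R →ₐ[K] R}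

theorem powSpan_mono {s t : Set ℕ} (h : s ⊆ t) : powSpan A x s ≤ powSpan A x t :=
  Submodule.span_mono (Set.image_mono h)

theorem mul_pow_mem_powSpan {s : Set ℕ} {a : R} {i : ℕ} (ha : a ∈ A) (hi : i ∈ s) :
    a * x ^ i ∈ powSpan A x s :=
  Submodule.smul_mem _ (⟨a, ha⟩ : A) (Submodule.subset_span ⟨i, hi, rfl⟩)

theorem pow_mul_eq (hσ : ∀ a ∈ A, σ a ∈ A) (hx : ∀ a ∈ A, x * a = σ a * x) (i : ℕ) :
    ∀ a ∈ A, (σ ^ i) a ∈ A ∧ x ^ i * a = (σ ^ i) a * x ^ i := by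
  induction i with
  | zero => simp
  | succ i ih =>
    intro a ha
    obtain ⟨hmem, hcomm⟩ := ih _ (hσ a ha)
    rw [pow_succ σ, pow_succ x, mul_assoc, hx a ha, ← mul_assoc, hcomm, mul_assoc]
    exact ⟨hmem, rfl⟩

theorem mul_mem_powSpan (hσ : ∀ a ∈ A, σ a ∈ A) (hx : ∀ a ∈ A, x * a = σ a * x) {s t : Set ℕ}
    {a b : R} (ha : a ∈ powSpan A x s) (hb : b ∈ powSpan A x t) : a * b ∈ powSpan A x (s + t) := by
  induction ha using Submodule.span_induction with
  | zero => simp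
  | add a a' _ _ ih ih' => rw [add_mul]; exact add_mem ih ih'
  | smul c a _ ih => rw [smul_mul_assoc]; exact Submodule.smul_mem _ c ih
  | mem a ha =>
    obtain ⟨i, hi, rfl⟩ := ha
    induction hb using Submodule.span_induction with
    | zero => simp
    | add b b' _ _ ih ih' => rw [mul_add]; exact add_mem ih ih'
    | smul c b _ ih =>
      obtain ⟨hmem, hcomm⟩ := pow_mul_eq hσ hx i c c.2
      have hc : x ^ i * c • b = (⟨_, hmem⟩ : A) • (x ^ i * b) := by
        rw [Subalgebra.smul_def, Subalgebra.smul_def, smul_eq_mul, smul_eq_mul, ← mul_assoc,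
          hcomm, mul_assoc]
      exact hc ▸ Submodule.smul_mem _ _ ih
    | mem b hb =>
      obtain ⟨j, hj, rfl⟩ := hb
      exact Submodule.subset_span ⟨i + j, Set.add_mem_add hi hj, pow_add x i j⟩

theorem exists_mem_powSpan_Iio_of_mem_adjoin (hσ : ∀ a ∈ A, σ a ∈ A)
    (hx : ∀ a ∈ A, x * a = σ a * x) {b : R} (hb : b ∈ Algebra.adjoin K (A ∪ {x} : Set R)) :
    ∃ n, b ∈ powSpan A x (Set.Iio n) := by
  have hA {a : R} (ha : a ∈ A) : a ∈ powSpan A x (Set.Iio 1) := by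
    simpa using mul_pow_mem_powSpan (x := x) ha (Set.mem_Iio.2 Nat.zero_lt_one)
  induction hb using Algebra.adjoin_induction with
  | mem b hb =>
    rcases hb with hb | rfl
    · exact ⟨1, hA hb⟩
    · exact ⟨2, Submodule.subset_span ⟨1, Nat.one_lt_two, pow_one _⟩⟩
  | algebraMap c => exact ⟨1, hA (algebraMap_mem A c)⟩
  | add a b _ _ ha hb =>
    obtain ⟨m, hm⟩ := ha
    obtain ⟨n, hn⟩ := hb
    exact ⟨max m n, add_mem (powSpan_mono (Set.Iio_subset_Iio (le_max_left m n)) hm)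
      (powSpan_mono (Set.Iio_subset_Iio (le_max_right m n)) hn)⟩
  | mul a b _ _ ha hb =>
    obtain ⟨m, hm⟩ := ha
    obtain ⟨n, hn⟩ := hb
    refine ⟨m + n, powSpan_mono ?_ (mul_mem_powSpan hσ hx hm hn)⟩
    rintro _ ⟨i, hi, j, hj, rfl⟩
    exact Nat.add_lt_add hi hj

theorem leading_mul_leading (hσ : ∀ a ∈ A, σ a ∈ A) (hx : ∀ a ∈ A, x * a = σ a * x)
    {α β r s : R} {m n : ℕ} (hα : α ∈ A) (hβ : β ∈ A) (hr : r ∈ powSpan A x (Set.Iio m))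
    (hs : s ∈ powSpan A x (Set.Iio n)) :
    ∃ z ∈ powSpan A x (Set.Iio (m + n)),
      (α * x ^ m + r) * (β * x ^ n + s) = α * (σ ^ m) β * x ^ (m + n) + z := by
  have hlead : α * x ^ m * (β * x ^ n) = α * (σ ^ m) β * x ^ (m + n) := by
    rw [mul_assoc, ← mul_assoc (x ^ m), (pow_mul_eq hσ hx m β hβ).2, pow_add]
    simp only [mul_assoc]
  have hleft := mul_mem_powSpan hσ hx (mul_pow_mem_powSpan hα (Set.mem_singleton m)) hs
  have hright := mul_mem_powSpan hσ hx hr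
    (add_mem (mul_pow_mem_powSpan (x := x) hβ (Set.self_mem_Iic (a := n)))
      (powSpan_mono Set.Iio_subset_Iic_self hs))
  refine ⟨α * x ^ m * s + r * (β * x ^ n + s),
    add_mem (powSpan_mono ?_ hleft) (powSpan_mono ?_ hright), ?_⟩
  · rintro _ ⟨i, rfl, j, hj, rfl⟩
    exact Nat.add_lt_add_left hj i
  · rintro _ ⟨i, hi, j, hj, rfl⟩
    exact Nat.add_lt_add_of_lt_of_le hi hj
  · rw [add_mul, mul_add, hlead, add_assoc]

theorem exists_eq_mul_pow_add_of_mem_powSpan {b : R} {n : ℕ}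
    (hb : b ∈ powSpan A x (Set.Iio (n + 1))) :
    ∃ α ∈ A, ∃ r ∈ powSpan A x (Set.Iio n), b = α * x ^ n + r := by
  have hIio : Set.Iio (n + 1) = insert n (Set.Iio n) := Order.Iio_succ_eq_insert n
  rw [powSpan, hIio, Set.image_insert_eq, Submodule.mem_span_insert] at hb
  obtain ⟨α, r, hr, rfl⟩ := hb
  exact ⟨α, α.2, r, hr, rfl⟩

theorem exists_eq_mul_of_mul_pow_add_eq (hσ : ∀ a ∈ A, σ a ∈ A)
    (hx : ∀ a ∈ A, x * a = σ a * x) (hli : LinearIndependent A fun n : ℕ => x ^ n)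
    {p α r d : R} {n : ℕ} (hp : p ∈ A) (hα : α ∈ A) (hr : r ∈ powSpan A x (Set.Iio n))
    (hd : d ∈ Algebra.adjoin K (A ∪ {x} : Set R)) (h : α * x ^ n + r = p * d) :
    ∃ β ∈ A, α = p * β := by
  obtain ⟨m, hm⟩ := exists_mem_powSpan_Iio_of_mem_adjoin hσ hx hd
  obtain ⟨g, hg, rfl⟩ := (Finsupp.mem_span_image_iff_linearCombination A).1 hr
  obtain ⟨f, -, rfl⟩ := (Finsupp.mem_span_image_iff_linearCombination A).1 hm
  have hgn : g n = 0 := by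
    by_contra hne
    exact lt_irrefl n (hg (Finsupp.mem_support_iff.2 hne))
  have heq : Finsupp.single n (⟨α, hα⟩ : A) + g = (⟨p, hp⟩ : A) • f := by
    refine hli ?_
    rw [map_add, map_smul, Finsupp.linearCombination_single]
    exact h
  refine ⟨f n, (f n).2, ?_⟩
  simpa [hgn] using congrArg (fun z => ((z n : A) : R)) heq

end PowSpan

section SkewExtension

variable {K : Type u} [Field K] {R : Type*} [Ring R] [Algebra K R]
  {A B : Subalgebra K R} {x : R} {σ : R →ₐ[K] R} {p : R} {t : Kˣ}

theorem eq_mul_or_exists_leading (hAB : A ≤ B) (hxB : x ∈ B) {n : ℕ} {b : R}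
    (hb : b ∈ powSpan A x (Set.Iio n)) :
    (∃ d ∈ B, b = p * d) ∨
      ∃ d ∈ B, ∃ m, ∃ α ∈ A, (¬ ∃ β ∈ A, α = p * β) ∧
        ∃ r ∈ powSpan A x (Set.Iio m), b = p * d + (α * x ^ m + r) := by
  induction n generalizing b with
  | zero =>
    have hb0 : b = 0 := by simpa [powSpan] using hb
    exact .inl ⟨0, zero_mem B, by rw [hb0, mul_zero]⟩
  | succ n ih =>
    obtain ⟨α, hα, r, hr, rfl⟩ := exists_eq_mul_pow_add_of_mem_powSpan hb
    by_cases hdvd : ∃ β ∈ A, α = p * β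
    · obtain ⟨β, hβ, rfl⟩ := hdvd
      have hmem : β * x ^ n ∈ B := mul_mem (hAB hβ) (pow_mem hxB n)
      rcases ih hr with ⟨d, hd, rfl⟩ | ⟨d, hd, m, α, hα, hndvd, s, hs, rfl⟩
      · exact .inl ⟨β * x ^ n + d, add_mem hmem hd, by rw [mul_add, mul_assoc]⟩
      · refine .inr ⟨β * x ^ n + d, add_mem hmem hd, m, α, hα, hndvd, s, hs, ?_⟩
        rw [mul_add, mul_assoc, add_assoc]
    · exact .inr ⟨0, zero_mem B, n, α, hα, hdvd, r, hr, by rw [mul_zero, zero_add]⟩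

theorem eq_mul_of_pow_apply_eq_mul (hinj : Function.Injective σ) (hσ : A.map σ = A)
    (hp : σ p = t • p) {m : ℕ} {β : R} (h : ∃ δ ∈ A, (σ ^ m) β = p * δ) :
    ∃ δ ∈ A, β = p * δ := by
  induction m with
  | zero => simpa using h
  | succ m ih =>
    obtain ⟨δ, hδ, e⟩ := h
    obtain ⟨δ', hδ', rfl⟩ := Subalgebra.mem_map.1 (hσ ▸ hδ)
    refine ih ⟨t⁻¹ • δ', A.smul_mem hδ' _, hinj ?_⟩
    rw [← AlgHom.mul_apply, ← pow_succ', e, map_mul, hp]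
    simp [Units.smul_def]

theorem IsPrimeIn.exists_mul_eq_mul_adjoin (h : IsPrimeIn K A p) (hx : x * p = t • (p * x)) :
    (∀ a ∈ Algebra.adjoin K (A ∪ {x} : Set R),
      ∃ b ∈ Algebra.adjoin K (A ∪ {x} : Set R), a * p = p * b) ∧
    ∀ a ∈ Algebra.adjoin K (A ∪ {x} : Set R),
      ∃ b ∈ Algebra.adjoin K (A ∪ {x} : Set R), p * a = b * p := by
  obtain ⟨-, -, -, hl, hr, -⟩ := h
  have hA {a : R} (ha : a ∈ A) : a ∈ Algebra.adjoin K (A ∪ {x} : Set R) :=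
    Algebra.subset_adjoin (Or.inl ha)
  have hxmem : x ∈ Algebra.adjoin K (A ∪ {x} : Set R) := Algebra.subset_adjoin (Or.inr rfl)
  constructor
  · refine fun a ha => exists_mul_eq_mul_of_mem_adjoin ?_ ha
    rintro a (ha | rfl)
    · obtain ⟨b, hb, e⟩ := hl a ha
      exact ⟨b, hA hb, e⟩
    · exact ⟨t • a, Subalgebra.smul_mem _ hxmem _, by rw [hx, mul_smul_comm]⟩
  · refine fun a ha => exists_mul_eq_mul_of_mem_adjoin' ?_ ha
    rintro a (ha | rfl)
    · obtain ⟨b, hb, e⟩ := hr a ha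
      exact ⟨b, hA hb, e⟩
    · exact ⟨t⁻¹ • a, Subalgebra.smul_mem _ hxmem _, by rw [smul_mul_assoc, hx, inv_smul_smul]⟩

-- Gauss's lemma: otherwise both factors can be reduced modulo `p` until `p` does not divide their
-- leading coefficients, although it divides the leading coefficient of the product.
theorem IsPrimeIn.exists_eq_mul_or_of_mem_adjoin (h : IsPrimeIn K A p)
    (hinj : Function.Injective σ) (hσ : A.map σ = A) (hp : σ p = t • p)
    (hx : ∀ a ∈ A, x * a = σ a * x) (hli : LinearIndependent A fun n : ℕ => x ^ n) {a b d : R}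
    (ha : a ∈ Algebra.adjoin K (A ∪ {x} : Set R)) (hb : b ∈ Algebra.adjoin K (A ∪ {x} : Set R))
    (hd : d ∈ Algebra.adjoin K (A ∪ {x} : Set R)) (hab : a * b = p * d) :
    (∃ e ∈ Algebra.adjoin K (A ∪ {x} : Set R), a = p * e) ∨
      ∃ e ∈ Algebra.adjoin K (A ∪ {x} : Set R), b = p * e := by
  set B := Algebra.adjoin K (A ∪ {x} : Set R)
  have hAB : A ≤ B := fun a ha => Algebra.subset_adjoin (Or.inl ha)
  have hxB : x ∈ B := Algebra.subset_adjoin (Or.inr rfl)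
  have hσ' (a : R) (ha : a ∈ A) : σ a ∈ A := hσ ▸ Subalgebra.mem_map.2 ⟨a, ha, rfl⟩
  obtain ⟨i, hi⟩ := exists_mem_powSpan_Iio_of_mem_adjoin hσ' hx ha
  obtain ⟨j, hj⟩ := exists_mem_powSpan_Iio_of_mem_adjoin hσ' hx hb
  rcases eq_mul_or_exists_leading (p := p) hAB hxB hi with
    hdvd | ⟨d₁, hd₁, m, α, hα, hα', r, hr, ea⟩
  · exact .inl hdvd
  rcases eq_mul_or_exists_leading (p := p) hAB hxB hj with
    hdvd | ⟨d₂, hd₂, n, β, hβ, hβ', s, hs, eb⟩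
  · exact .inr hdvd
  exfalso
  obtain ⟨e, he, hcomm⟩ := (h.exists_mul_eq_mul_adjoin (by rw [hx p h.1, hp, smul_mul_assoc])).1 _
    (sub_mem ha (mul_mem (hAB h.1) hd₁))
  obtain ⟨z, hz, hmul⟩ := leading_mul_leading hσ' hx hα hβ hr hs
  have hrest : (α * x ^ m + r) * (β * x ^ n + s) = p * (d - d₁ * b - e * d₂) := by
    rw [← sub_eq_of_eq_add' ea, ← sub_eq_of_eq_add' eb]
    simp only [mul_sub, ← mul_assoc, ← hcomm, ← hab]
    noncomm_ring
  have hβm := (pow_mul_eq hσ' hx m β hβ).1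
  have hcoeff := exists_eq_mul_of_mul_pow_add_eq hσ' hx hli h.1 (mul_mem hα hβm) hz
    (sub_mem (sub_mem hd (mul_mem hd₁ hb)) (mul_mem he hd₂)) (hmul ▸ hrest)
  rcases h.2.2.2.2.2 α hα _ hβm hcoeff with hdvd | hdvd
  · exact hα' hdvd
  · exact hβ' (eq_mul_of_pow_apply_eq_mul hinj hσ hp hdvd)

theorem IsPrimeIn.adjoin (h : IsPrimeIn K A p) (hinj : Function.Injective σ)
    (hσ : A.map σ = A) (hp : σ p = t • p) (hx : ∀ a ∈ A, x * a = σ a * x)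
    (hli : LinearIndependent A fun n : ℕ => x ^ n) :
    IsPrimeIn K (Algebra.adjoin K (A ∪ {x} : Set R)) p := by
  have hnormal := h.exists_mul_eq_mul_adjoin (x := x) (t := t)
    (by rw [hx p h.1, hp, smul_mul_assoc])
  refine ⟨Algebra.subset_adjoin (Or.inl h.1), h.2.1, ?_, hnormal.1, hnormal.2,
    fun a ha b hb ⟨d, hd, hab⟩ =>
      h.exists_eq_mul_or_of_mem_adjoin hinj hσ hp hx hli ha hb hd hab⟩
  rintro ⟨u, hu, hpu, hup⟩
  have hσ' (a : R) (ha : a ∈ A) : σ a ∈ A := hσ ▸ Subalgebra.mem_map.2 ⟨a, ha, rfl⟩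
  obtain ⟨v, hv, hpv⟩ := exists_eq_mul_of_mul_pow_add_eq (n := 0) hσ' hx hli h.1 (one_mem A)
    (zero_mem _) hu (by simp [hpu])
  have huv : u = v := by rw [← mul_one u, hpv, ← mul_assoc, hup, one_mul]
  exact h.2.2.1 ⟨u, huv ▸ hv, hpu, hup⟩

end SkewExtension

section Conjugation

variable {K : Type u} [Field K] {D : Type*} [DivisionRing D] [Algebra K D] {R : Type*} [Ring R]
  [Algebra K R] {A : Subalgebra K R} {g p b : R}

theorem isPrimeIn_map_iff {S : Type*} [Ring S] [Algebra K S] {φ : R →ₐ[K] S}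
    (hφ : Function.Injective φ) : IsPrimeIn K (A.map φ) (φ p) ↔ IsPrimeIn K A p := by
  simp [IsPrimeIn, ← map_mul, hφ.eq_iff, map_ne_zero_iff φ hφ, map_eq_one_iff φ hφ]

theorem IsPrimeIn.of_mul_eq_mul {ι : R →ₐ[K] D} (hι : Function.Injective ι)
    (h : IsPrimeIn K A p) (hg : g ≠ 0) (hleft : ∀ a ∈ A, ∃ b ∈ A, g * a = b * g)
    (hright : ∀ a ∈ A, ∃ b ∈ A, a * g = g * b) (hb : g * p = b * g) : IsPrimeIn K A b := by
  have hg' : ι g ≠ 0 := (map_ne_zero_iff ι hι).2 hg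
  let conj : R →ₐ[K] D :=
    (MulSemiringAction.toAlgHom K D (ConjAct.toConjAct (Units.mk0 (ι g) hg'))).comp ι
  have hconj : Function.Injective conj :=
    (MulAction.injective (ConjAct.toConjAct (Units.mk0 (ι g) hg'))).comp hι
  have conj_eq {a c : R} (e : g * a = c * g) : conj a = ι c := by
    have : ι g * ι a = ι c * ι g := by rw [← map_mul, e, map_mul]
    simp [conj, ConjAct.units_smul_def, this, hg']
  have hA : A.map conj = A.map ι := by
    ext d
    simp only [Subalgebra.mem_map]
    constructor
    · rintro ⟨a, ha, rfl⟩
      obtain ⟨c, hc, e⟩ := hleft a ha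
      exact ⟨c, hc, (conj_eq e).symm⟩
    · rintro ⟨a, ha, rfl⟩
      obtain ⟨c, hc, e⟩ := hright a ha
      exact ⟨c, hc, conj_eq e.symm⟩
  rwa [← isPrimeIn_map_iff hι, ← conj_eq hb, ← hA, isPrimeIn_map_iff hconj]

end Conjugation

section OrdMonomial

variable {K : Type u} [Field K] {R : Type*} [Ring R] [Algebra K R] {N : ℕ}

theorem ordMonomial_zero (x : Fin N → R) : ordMonomial x 0 = 1 := by simp [ordMonomial]

theorem list_prod_pow_add {x : Fin N → R} {k : Fin N} {f g : Fin N → ℕ} (hf : ∀ i, k < i → f i = 0)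
    (hg : ∀ i, i < k → g i = 0) {L : List (Fin N)} (hL : L.Pairwise (· < ·)) :
    (L.map fun i => x i ^ (f + g) i).prod =
      (L.map fun i => x i ^ f i).prod * (L.map fun i => x i ^ g i).prod := by
  induction L with
  | nil => simp
  | cons i L ih =>
    obtain ⟨hi, hL⟩ := List.pairwise_cons.1 hL
    rw [List.map_cons, List.map_cons, List.map_cons, List.prod_cons, List.prod_cons,
      List.prod_cons, ih hL, Pi.add_apply]
    by_cases hik : i < k
    · simp only [hg i hik, add_zero, pow_zero, one_mul, mul_assoc]
    · have hone : (L.map fun j => x j ^ f j).prod = 1 := List.prod_eq_one (by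
        simp only [List.forall_mem_map]
        exact fun j hj => by rw [hf j ((not_lt.1 hik).trans_lt (hi j hj)), pow_zero])
      rw [hone, one_mul, mul_one, pow_add, mul_assoc]

theorem map_ordMonomial {S F : Type*} [Ring S] [FunLike F R S] [MonoidHomClass F R S] (φ : F)
    (x : Fin N → R) (m : Fin N → ℕ) : φ (ordMonomial x m) = ordMonomial (φ ∘ x) m := by
  simp only [ordMonomial, map_list_prod, List.map_map, Function.comp_def, map_pow]

theorem ordMonomial_add {x : Fin N → R} {k : Fin N} {f g : Fin N → ℕ}
    (hf : ∀ i, k < i → f i = 0) (hg : ∀ i, i < k → g i = 0) :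
    ordMonomial x (f + g) = ordMonomial x f * ordMonomial x g :=
  list_prod_pow_add hf hg (List.pairwise_lt_finRange N)

theorem ordMonomial_single (x : Fin N → R) (k : Fin N) (n : ℕ) :
    ordMonomial x (Pi.single k n) = x k ^ n := by
  rw [ordMonomial, List.prod_map_eq_pow_single k]
  · simp [List.count_eq_one_of_mem (List.nodup_finRange N) (List.mem_finRange k)]
  · intro i hi _
    simp [hi]

theorem gen_mul_ordMonomial (x : Fin N → R) {k : Fin N} {g : Fin N → ℕ}
    (hg : ∀ i, i < k → g i = 0) :
    x k * ordMonomial x g = ordMonomial x (Pi.single k 1 + g) := by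
  rw [ordMonomial_add (fun i hi => Pi.single_eq_of_ne hi.ne' _) hg, ordMonomial_single, pow_one]

theorem ordMonomial_mem {x : Fin N → R} {A : Subalgebra K R} {f : Fin N → ℕ}
    (h : ∀ i, f i ≠ 0 → x i ∈ A) : ordMonomial x f ∈ A := by
  refine list_prod_mem (by
    simp only [List.forall_mem_map]
    intro i _
    by_cases hi : f i = 0
    · simp [hi, one_mem]
    · exact pow_mem (h i hi) _)

theorem map_ordMonomial_of_eigen {φ : R →ₐ[K] R} {x : Fin N → R} {c : Fin N → Kˣ} {f : Fin N → ℕ}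
    (h : ∀ i, f i ≠ 0 → φ (x i) = c i • x i) :
    φ (ordMonomial x f) = (∏ i, c i ^ f i) • ordMonomial x f := by
  have hpow (i : Fin N) : φ (x i) ^ f i = c i ^ f i • x i ^ f i := by
    by_cases hi : f i = 0
    · simp [hi]
    · rw [h i hi, smul_pow]
  rw [map_ordMonomial, ordMonomial, ordMonomial, Fin.prod_univ_def]
  simp only [Function.comp_def, hpow]
  induction List.finRange N with
  | nil => simp
  | cons i L ih => simp only [List.map_cons, List.prod_cons, ih, smul_mul_smul_comm]

theorem exponent_induction {P : (Fin N → ℕ) → Prop} (zero : P 0)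
    (single_add : ∀ (k : Fin N) (f : Fin N → ℕ), (∀ i, i < k → f i = 0) → P f →
      P (Pi.single k 1 + f)) (f : Fin N → ℕ) : P f := by
  induction hn : ∑ i, f i generalizing f with
  | zero =>
    have hf : f = 0 := funext fun i => Finset.sum_eq_zero_iff.1 hn i (Finset.mem_univ i)
    exact hf ▸ zero
  | succ n ih =>
    have hf : ∃ k, f k ≠ 0 := by
      by_contra! h
      simp [h] at hn
    obtain ⟨k, hk⟩ := exists_minimal_of_wellFoundedLT (fun k => f k ≠ 0) hf
    have hsplit : f = Pi.single k 1 + (f - Pi.single k 1) := by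
      refine (add_tsub_cancel_of_le fun i => ?_).symm
      rcases eq_or_ne i k with rfl | hik
      · simpa using Nat.one_le_iff_ne_zero.2 hk.prop
      · simp [hik]
    rw [hsplit] at hn ⊢
    refine single_add k _ (fun i hi => ?_) (ih _ ?_)
    · simpa [hi.ne] using hk.not_prop_of_lt hi
    · simp only [Pi.add_apply, Finset.sum_add_distrib, Finset.sum_pi_single', Finset.mem_univ,
        if_true] at hn
      lia

end OrdMonomial

section Twist

variable {G : Type*} [CommMonoid G] {N : ℕ}

/-- The scalar created when the product `x^f * x^g` of ordered monomials is put in order, up to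
lower terms: each `x k` in the first factor passes every `x l` with `l < k` in the second one. -/
def twist (lam2 : Fin N → Fin N → G) (f g : Fin N → ℕ) : G :=
  ∏ k, ∏ l, (if l < k then lam2 k l else 1) ^ (f k * g l)

variable (lam2 : Fin N → Fin N → G) (f f' g g' : Fin N → ℕ) (k : Fin N)

theorem twist_zero_left : twist lam2 0 g = 1 := by simp [twist]

theorem twist_add_left : twist lam2 (f + f') g = twist lam2 f g * twist lam2 f' g := by
  simp only [twist, Pi.add_apply, add_mul, pow_add, Finset.prod_mul_distrib]

theorem twist_add_right : twist lam2 f (g + g') = twist lam2 f g * twist lam2 f g' := by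
  simp only [twist, Pi.add_apply, mul_add, pow_add, Finset.prod_mul_distrib]

theorem twist_single_left :
    twist lam2 (Pi.single k 1) g = ∏ l, (if l < k then lam2 k l else 1) ^ g l := by
  rw [twist, Fintype.prod_eq_single k fun i hi => by simp [hi]]
  simp

variable {g k}

theorem twist_single_left_eq_one (hg : ∀ l, l < k → g l = 0) :
    twist lam2 (Pi.single k 1) g = 1 := by
  rw [twist_single_left]
  refine Finset.prod_eq_one fun l _ => ?_
  split_ifs with hl
  · rw [hg l hl, pow_zero]
  · exact one_pow _

end Twist

section ColexExponents

variable {ι : Type*} {α : ι → Type*} [LinearOrder ι] [∀ i, AddCommMonoid (α i)]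

instance colexIsOrderedCancelAddMonoid [∀ i, PartialOrder (α i)]
    [∀ i, IsOrderedCancelAddMonoid (α i)] : IsOrderedCancelAddMonoid (Colex (∀ i, α i)) where
  add_le_add_left _ _ hxy z := hxy.elim (fun h => h ▸ le_rfl) fun ⟨i, hi⟩ =>
    Or.inr ⟨i, fun j hj => congrArg (· + z j) (hi.1 j hj), add_lt_add_left hi.2 _⟩
  le_of_add_le_add_left _ _ _ hxy := hxy.elim (fun h => (add_left_cancel h).le) fun ⟨i, hi⟩ =>
    Or.inr ⟨i, fun j hj => add_left_cancel (hi.1 j hj), lt_of_add_lt_add_left hi.2⟩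

-- The partial order underlying `Pi.Colex.linearOrder` agrees with the one in the previous instance
-- only up to unfolding that instance search does not perform.
instance colexLinearOrderIsOrderedCancelAddMonoid [WellFoundedGT ι] [∀ i, LinearOrder (α i)]
    [∀ i, IsOrderedCancelAddMonoid (α i)] :
    @IsOrderedCancelAddMonoid (Colex (∀ i, α i)) _ Pi.Colex.linearOrder.toPreorder :=
  colexIsOrderedCancelAddMonoid

variable {N : ℕ}

theorem toColex_lt_single_add {k : Fin N} {f g : Fin N → ℕ} (h : ∀ i, k ≤ i → f i = g i) :
    toColex f < toColex (Pi.single k 1 + g) :=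
  ⟨k, fun i hi => by simp [hi.ne', h i hi.le], by simp [h k le_rfl]⟩

theorem eq_zero_of_toColex_le {n : ℕ} {f g : Fin N → ℕ} (hfg : toColex f ≤ toColex g)
    (hg : ∀ i : Fin N, n ≤ i → g i = 0) (i : Fin N) (hi : n ≤ i) : f i = 0 := by
  obtain h | ⟨j, hj, hlt⟩ := hfg
  · rw [toColex_inj.1 h, hg i hi]
  · have hjn : (j : ℕ) < n := not_le.1 fun hnj => Nat.not_lt_zero _ (hlt.trans_eq (hg j hnj))
    exact (hj i (hjn.trans_le hi)).trans (hg i hi)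

theorem wellQuasiOrdered_exists_eq_add :
    WellQuasiOrdered fun m n : Colex (Fin N → ℕ) => ∃ k, n = k + m := by
  intro f
  obtain ⟨i, j, hij, h⟩ := wellQuasiOrdered_le (α := Fin N → ℕ) fun i => ofColex (f i)
  exact ⟨i, j, hij, toColex (ofColex (f j) - ofColex (f i)),
    congrArg toColex (tsub_add_cancel_of_le h).symm⟩

end ColexExponents

section PBW

variable {K : Type u} [Field K] {R : Type v} [Ring R] [Algebra K R] {N r : ℕ}

/-- The unit `lam2 k l`, for `l < k`, is the eigenvalue `λ_{kl}` of `h_k` on `x_l`. -/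
def QNA.IsEigenMatrix (Q : QNA K R N r) (lam2 : Fin N → Fin N → Kˣ) : Prop :=
  ∀ k l : Fin N, l < k → Q.act (Q.h k) (Q.x l) = ((lam2 k l : Kˣ) : K) • Q.x l

theorem Rsub_succ (x : Fin N → R) (k : Fin N) :
    Rsub K x ((k : ℕ) + 1) = Algebra.adjoin K ((Rsub K x (k : ℕ) : Set R) ∪ {x k}) := by
  have hset : {l : Fin N | (l : ℕ) < (k : ℕ) + 1} = {l : Fin N | (l : ℕ) < (k : ℕ)} ∪ {k} := by
    ext l
    simp only [Set.mem_ofPred_eq, Nat.lt_succ_iff_lt_or_eq, Fin.val_inj, Set.mem_union,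
      Set.mem_singleton_iff]
  rw [Rsub, hset, Set.image_union, Set.image_singleton, Algebra.adjoin_union,
    Algebra.adjoin_union, Rsub, Algebra.adjoin_eq]

theorem gen_mem_Rsub (x : Fin N → R) {l : Fin N} {n : ℕ} (h : (l : ℕ) < n) : x l ∈ Rsub K x n :=
  Algebra.subset_adjoin ⟨l, h, rfl⟩

theorem ordMonomial_mem_Rsub (x : Fin N → R) {n : ℕ} {f : Fin N → ℕ}
    (hf : ∀ i : Fin N, n ≤ i → f i = 0) : ordMonomial x f ∈ Rsub K x n :=
  ordMonomial_mem fun i hi => gen_mem_Rsub x (not_le.1 fun h => hi (hf i h))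

theorem Rsub_mono (x : Fin N → R) {m n : ℕ} (h : m ≤ n) : Rsub K x m ≤ Rsub K x n :=
  Algebra.adjoin_mono (Set.image_mono fun _ hl => lt_of_lt_of_le hl h)

theorem QNA.Rsub_eq_top (Q : QNA K R N r) : Rsub K Q.x N = ⊤ := by
  simp [Rsub, Q.gen]

namespace QNA.IsEigenMatrix

variable {Q : QNA K R N r} {lam2 : Fin N → Fin N → Kˣ}

theorem act_ordMonomial (hQ : Q.IsEigenMatrix lam2) {k : Fin N} {f : Fin N → ℕ}
    (hf : ∀ i, k ≤ i → f i = 0) :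
    Q.act (Q.h k) (ordMonomial Q.x f) =
      twist lam2 (Pi.single k 1) f • ordMonomial Q.x f := by
  rw [twist_single_left]
  refine map_ordMonomial_of_eigen (φ := (Q.act (Q.h k)).toAlgHom) fun i hi => ?_
  have hik : i < k := not_le.1 fun h => hi (hf i h)
  simpa [hik, Units.smul_def] using hQ k i hik

theorem gen_mul_ordMonomial_sub_mem (hQ : Q.IsEigenMatrix lam2) {k : Fin N}
    (hspan : Subalgebra.toSubmodule (Rsub K Q.x (k : ℕ)) ≤
      Submodule.span K (ordMonomial Q.x '' {f | ∀ i : Fin N, (k : ℕ) ≤ i → f i = 0}))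
    (g : Fin N → ℕ) :
    Q.x k * ordMonomial Q.x g -
        twist lam2 (Pi.single k 1) g • ordMonomial Q.x (Pi.single k 1 + g) ∈
      Submodule.span K (ordMonomial Q.x '' {f | ∀ i, k ≤ i → f i = g i}) := by
  obtain ⟨g₁, g₂, rfl, h₁, h₂⟩ : ∃ g₁ g₂ : Fin N → ℕ, g = g₁ + g₂ ∧
      (∀ i, k ≤ i → g₁ i = 0) ∧ ∀ i, i < k → g₂ i = 0 := by
    refine ⟨fun i => if i < k then g i else 0, fun i => if i < k then 0 else g i,
      funext fun i => ?_, fun i hi => if_neg hi.not_gt, fun i hi => if_pos hi⟩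
    by_cases hi : i < k <;> simp [hi]
  have hdelta := Q.stable k _ (ordMonomial_mem_Rsub Q.x h₁)
  have hrest : Q.x k * ordMonomial Q.x (g₁ + g₂) -
      twist lam2 (Pi.single k 1) (g₁ + g₂) • ordMonomial Q.x (Pi.single k 1 + (g₁ + g₂)) =
        skewDelta K Q.act Q.x Q.h k (ordMonomial Q.x g₁) * ordMonomial Q.x g₂ := by
    have h₂' : ∀ i, i < k → (Pi.single k 1 + g₂ : Fin N → ℕ) i = 0 := fun i hi => by
      simp [hi.ne, h₂ i hi]
    rw [skewDelta, hQ.act_ordMonomial h₁, twist_add_right, twist_single_left_eq_one _ h₂, mul_one,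
      ordMonomial_add (fun i hi => h₁ i hi.le) h₂, add_left_comm,
      ordMonomial_add (fun i hi => h₁ i hi.le) h₂', ← gen_mul_ordMonomial Q.x h₂, sub_mul,
      smul_mul_assoc, smul_mul_assoc, mul_assoc, mul_assoc]
  rw [hrest]
  refine Submodule.span_le.2 ?_ (Submodule.mem_map_of_mem (f := LinearMap.mulRight K
    (ordMonomial Q.x g₂)) (hspan hdelta) |> (Submodule.map_span _ _).le)
  rintro _ ⟨_, ⟨f, hf, rfl⟩, rfl⟩
  refine Submodule.subset_span ⟨f + g₂, fun i hi => ?_, ordMonomial_add (fun i hi => hf i hi.le) h₂⟩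
  simp [hf i hi, h₁ i hi]

theorem Rsub_le_span (hQ : Q.IsEigenMatrix lam2) (n : ℕ) :
    Subalgebra.toSubmodule (Rsub K Q.x n) ≤
      Submodule.span K (ordMonomial Q.x '' {f | ∀ i : Fin N, n ≤ i → f i = 0}) := by
  induction n using Nat.strong_induction_on with
  | _ n ih =>
  set S := Submodule.span K (ordMonomial Q.x '' {f | ∀ i : Fin N, n ≤ i → f i = 0})
  have hgen (l : Fin N) (hl : (l : ℕ) < n) : S ≤ S.comap (LinearMap.mulLeft K (Q.x l)) := by
    refine Submodule.span_le.2 ?_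
    rintro _ ⟨g, hg, rfl⟩
    have hlower := hQ.gen_mul_ordMonomial_sub_mem (ih l hl) g
    refine (Submodule.sub_mem_iff_left S (Submodule.smul_of_tower_mem _ _
      (Submodule.subset_span ⟨_, fun i hi => ?_, rfl⟩))).1
      (Submodule.span_mono (Set.image_mono fun f hf i hi => ?_) hlower)
    · simp [hg i hi, (Fin.val_ne_iff.1 (hl.trans_le hi).ne').symm]
    · exact (hf i (hl.le.trans hi)).trans (hg i hi)
  have hmul (a : R) (ha : a ∈ Rsub K Q.x n) : ∀ s ∈ S, a * s ∈ S := by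
    induction ha using Algebra.adjoin_induction with
    | mem _ h =>
      obtain ⟨l, hl, rfl⟩ := h
      exact hgen l hl
    | algebraMap t => exact fun s hs => by simpa [← Algebra.smul_def] using S.smul_mem t hs
    | add a b _ _ ha hb => exact fun s hs => by simpa [add_mul] using add_mem (ha s hs) (hb s hs)
    | mul a b _ _ ha hb => exact fun s hs => by simpa [mul_assoc] using ha _ (hb s hs)
  intro a ha
  simpa using hmul a ha 1 (Submodule.subset_span ⟨0, by simp, ordMonomial_zero _⟩)

/-- The Poincaré–Birkhoff–Witt basis of ordered monomials.  Exponents are compared at the largest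
index where they differ. -/
def pbwBasis (hQ : Q.IsEigenMatrix lam2) : Module.Basis (Colex (Fin N → ℕ)) K R :=
  Module.Basis.mk (v := fun m => ordMonomial Q.x (ofColex m))
    (Q.pbw.comp _ ofColex.injective) (fun a _ => by
      have ha := hQ.Rsub_le_span N (Q.Rsub_eq_top ▸ Algebra.mem_top : a ∈ Rsub K Q.x N)
      refine Submodule.span_mono ?_ ha
      rintro _ ⟨f, -, rfl⟩
      exact ⟨toColex f, rfl⟩)

theorem pbwBasis_apply (hQ : Q.IsEigenMatrix lam2) (m : Colex (Fin N → ℕ)) :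
    hQ.pbwBasis m = ordMonomial Q.x (ofColex m) :=
  Module.Basis.mk_apply _ _ m

theorem image_pbwBasis (hQ : Q.IsEigenMatrix lam2) (s : Set (Colex (Fin N → ℕ))) :
    hQ.pbwBasis '' s = ordMonomial Q.x '' (toColex ⁻¹' s) := by
  ext a
  constructor
  · rintro ⟨m, hm, rfl⟩
    exact ⟨ofColex m, hm, (hQ.pbwBasis_apply m).symm⟩
  · rintro ⟨f, hf, rfl⟩
    exact ⟨toColex f, hf, hQ.pbwBasis_apply _⟩

theorem gen_mul_pbwBasis (hQ : Q.IsEigenMatrix lam2) (k : Fin N) (m : Colex (Fin N → ℕ)) :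
    HasLeadingTerm hQ.pbwBasis (Q.x k * hQ.pbwBasis m) (toColex (Pi.single k 1) + m)
      (twist lam2 (Pi.single k 1) (ofColex m) : Kˣ) := by
  rw [HasLeadingTerm, pbwBasis_apply, pbwBasis_apply, image_pbwBasis]
  exact Submodule.span_mono (Set.image_mono fun f hf => toColex_lt_single_add hf)
    (hQ.gen_mul_ordMonomial_sub_mem (hQ.Rsub_le_span k) (ofColex m))

theorem gen_mul (hQ : Q.IsEigenMatrix lam2) (k : Fin N) {a : R} {m : Colex (Fin N → ℕ)} {c : K}
    (ha : HasLeadingTerm hQ.pbwBasis a m c) :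
    HasLeadingTerm hQ.pbwBasis (Q.x k * a) (toColex (Pi.single k 1) + m)
      ((twist lam2 (Pi.single k 1) (ofColex m) : Kˣ) * c) := by
  have hlower : Submodule.span K (hQ.pbwBasis '' Set.Iio m) ≤
      (Submodule.span K (hQ.pbwBasis '' Set.Iio (toColex (Pi.single k 1) + m))).comap
        (LinearMap.mulLeft K (Q.x k)) := by
    refine Submodule.span_le.2 ?_
    rintro _ ⟨n, hn, rfl⟩
    exact Submodule.span_mono (Set.image_mono (Set.Iic_subset_Iio.2 (add_lt_add_right hn _)))
      (hQ.gen_mul_pbwBasis k n).mem_span_Iic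
  have hmain := ((hQ.gen_mul_pbwBasis k m).smul c).add_lower (hlower ha)
  rw [mul_comm c] at hmain
  convert hmain using 1
  simp [mul_sub]

theorem isMonomialBasis (hQ : Q.IsEigenMatrix lam2) :
    IsMonomialBasis hQ.pbwBasis fun m n => twist lam2 (ofColex m) (ofColex n) := by
  intro m n
  induction m using Colex.rec with | _ f =>
  induction f using exponent_induction with
  | zero => simpa [pbwBasis_apply, ordMonomial_zero, twist_zero_left] using
      hasLeadingTerm_basis hQ.pbwBasis n
  | single_add k f hf ih =>
    have hsplit : hQ.pbwBasis (toColex (Pi.single k 1 + f)) =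
        Q.x k * hQ.pbwBasis (toColex f) := by
      simp only [pbwBasis_apply, ofColex_toColex, gen_mul_ordMonomial Q.x hf]
    have hlead := hQ.gen_mul k ih
    rw [ofColex_add, twist_add_right, ofColex_toColex, twist_single_left_eq_one _ hf, one_mul,
      ← Units.val_mul, ← twist_add_left, ← add_assoc, ← mul_assoc, ← hsplit] at hlead
    exact hlead

theorem isDomain (hQ : Q.IsEigenMatrix lam2) : IsDomain R := hQ.isMonomialBasis.isDomain

theorem isNoetherianRing_op (hQ : Q.IsEigenMatrix lam2) : IsNoetherianRing Rᵐᵒᵖ :=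
  hQ.isMonomialBasis.op.isNoetherianRing Pi.Colex.wellFoundedLT wellQuasiOrdered_exists_eq_add

variable {a : R} {m : Colex (Fin N → ℕ)} {c : K} {n : ℕ}

theorem Rsub_le_span_pbwBasis (hQ : Q.IsEigenMatrix lam2) (n : ℕ) :
    Subalgebra.toSubmodule (Rsub K Q.x n) ≤
      Submodule.span K (hQ.pbwBasis '' {m | ∀ i : Fin N, n ≤ i → ofColex m i = 0}) := by
  rw [image_pbwBasis]
  exact hQ.Rsub_le_span n

theorem leadingExponent_eq_zero (hQ : Q.IsEigenMatrix lam2)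
    (h : HasLeadingTerm hQ.pbwBasis a m c) (hc : c ≠ 0) (ha : a ∈ Rsub K Q.x n) (i : Fin N)
    (hi : n ≤ i) : ofColex m i = 0 :=
  h.exponent_mem hc (hQ.Rsub_le_span_pbwBasis n ha) i hi

theorem mem_span_Iio_of_mem_Rsub (hQ : Q.IsEigenMatrix lam2) {k : Fin N}
    (ha : a ∈ Rsub K Q.x (k : ℕ)) (hm : ofColex m k ≠ 0) :
    a ∈ Submodule.span K (hQ.pbwBasis '' Set.Iio m) := by
  have hsub : {m' : Colex (Fin N → ℕ) | ∀ i : Fin N, (k : ℕ) ≤ i → ofColex m' i = 0} ⊆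
      Set.Iio m := fun m' hm' =>
    not_le.1 fun hle => hm (eq_zero_of_toColex_le hle hm' k le_rfl)
  exact Submodule.span_mono (Set.image_mono hsub) (hQ.Rsub_le_span_pbwBasis k ha)

theorem mem_Rsub_of_hasLeadingTerm (hQ : Q.IsEigenMatrix lam2)
    (h : HasLeadingTerm hQ.pbwBasis a m c) (hm : ∀ i : Fin N, n ≤ i → ofColex m i = 0) :
    a ∈ Rsub K Q.x n := by
  refine Submodule.span_le (p := Subalgebra.toSubmodule (Rsub K Q.x n)).2 ?_ h.mem_span_Iic
  rintro _ ⟨m', hm', rfl⟩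
  rw [pbwBasis_apply]
  exact ordMonomial_mem_Rsub _ (eq_zero_of_toColex_le hm' hm)

theorem mem_Rsub_iff_of_mul_eq_mul (hQ : Q.IsEigenMatrix lam2) {u a b : R} (hu : u ≠ 0)
    (h : u * a = b * u) : a ∈ Rsub K Q.x n ↔ b ∈ Rsub K Q.x n := by
  have := hQ.isDomain
  obtain rfl | ha := eq_or_ne a 0
  · have hb : b = 0 := by simpa [hu, eq_comm] using h
    simp [hb, zero_mem]
  have hb : b ≠ 0 := by
    rintro rfl
    simp [hu, ha] at h
  obtain ⟨k, e, he, hlu⟩ := exists_hasLeadingTerm hQ.pbwBasis hu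
  obtain ⟨m, c, hc, hla⟩ := exists_hasLeadingTerm hQ.pbwBasis ha
  obtain ⟨m', d, hd, hlb⟩ := exists_hasLeadingTerm hQ.pbwBasis hb
  obtain rfl : m = m' := hQ.isMonomialBasis.exponent_eq_of_mul_eq_mul hlu he hla hc hlb hd h
  exact ⟨fun h => hQ.mem_Rsub_of_hasLeadingTerm hlb (hQ.leadingExponent_eq_zero hla hc h),
    fun h => hQ.mem_Rsub_of_hasLeadingTerm hla (hQ.leadingExponent_eq_zero hlb hd h)⟩

theorem hasLeadingTerm_ordMonomial (hQ : Q.IsEigenMatrix lam2) (f : Fin N → ℕ) :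
    HasLeadingTerm hQ.pbwBasis (ordMonomial Q.x f) (toColex f) 1 := by
  simpa only [pbwBasis_apply, ofColex_toColex] using
    hasLeadingTerm_basis hQ.pbwBasis (toColex f)

theorem hasLeadingTerm_gen (hQ : Q.IsEigenMatrix lam2) (k : Fin N) :
    HasLeadingTerm hQ.pbwBasis (Q.x k) (toColex (Pi.single k 1)) 1 := by
  simpa only [ordMonomial_single, pow_one] using
    hQ.hasLeadingTerm_ordMonomial (Pi.single k 1)

theorem linearIndependent_gen_pow (hQ : Q.IsEigenMatrix lam2) (k : Fin N) :
    LinearIndependent (Rsub K Q.x (k : ℕ)) fun n : ℕ => Q.x k ^ n := by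
  classical
  rw [linearIndependent_iff']
  intro s g hg
  by_contra! hne
  obtain ⟨i, hi, hgi⟩ := hne
  have hlead (j : {j // g j ≠ 0}) := exists_hasLeadingTerm hQ.pbwBasis
    (Subtype.coe_ne_coe.2 j.2 : (g j : R) ≠ (0 : Rsub K Q.x (k : ℕ)))
  choose m d hd hm using hlead
  have hmul (j : {j // g j ≠ 0}) :
      HasLeadingTerm hQ.pbwBasis (g j • Q.x k ^ (j : ℕ))
        (m j + toColex (Pi.single k (j : ℕ))) _ :=
    hQ.isMonomialBasis.hasLeadingTerm_mul (hm j) (by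
      simpa only [ordMonomial_single] using hQ.hasLeadingTerm_ordMonomial (Pi.single k (j : ℕ)))
  have hinj : Function.Injective fun j : {j // g j ≠ 0} =>
      m j + toColex (Pi.single k (j : ℕ)) := by
    intro j j' h
    have hk : ofColex (m j) k + (Pi.single k (j : ℕ) : Fin N → ℕ) k =
        ofColex (m j') k + (Pi.single k (j' : ℕ) : Fin N → ℕ) k := congrFun h k
    rw [hQ.leadingExponent_eq_zero (hm j) (hd j) (g j).2 k le_rfl,
      hQ.leadingExponent_eq_zero (hm j') (hd j') (g j').2 k le_rfl] at hk
    simpa [Subtype.ext_iff] using hk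
  have hli := linearIndependent_of_hasLeadingTerm hinj (fun j => by simpa using hd j) hmul
  refine one_ne_zero (linearIndependent_iff'.1 hli (s.subtype fun j => g j ≠ 0) 1 ?_ ⟨i, hgi⟩
    (Finset.mem_subtype.2 hi))
  calc ∑ j ∈ s.subtype fun j => g j ≠ 0, (1 : K) • (g j • Q.x k ^ (j : ℕ))
      = ∑ j ∈ s with g j ≠ 0, g j • Q.x k ^ j := by
        simp only [one_smul, Finset.sum_subtype_eq_sum_filter (f := fun j => g j • Q.x k ^ j)]
    _ = 0 := (Finset.sum_filter_of_ne fun j _ hj => left_ne_zero_of_smul hj).trans hg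

end QNA.IsEigenMatrix

end PBW

section Ebar

variable {N : ℕ} {η : Fin N → ℤ} {k l : Fin N}

/-- The vector `ē_k`, as an exponent of an ordered monomial. -/
def ebarNat (η : Fin N → ℤ) (k : Fin N) : Fin N → ℕ :=
  fun l => if l ≤ k ∧ η l = η k then 1 else 0

theorem ebar_eq_natCast_ebarNat (η : Fin N → ℤ) (k : Fin N) :
    ebar η k = fun l => (ebarNat η k l : ℤ) := by
  funext l
  simp only [ebar, ebarNat, Nat.cast_ite, Nat.cast_one, Nat.cast_zero]

theorem ebarNat_self (η : Fin N → ℤ) (k : Fin N) : ebarNat η k k = 1 := by simp [ebarNat]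

theorem ebarNat_of_lt (η : Fin N → ℤ) (h : k < l) : ebarNat η k l = 0 := by
  simp [ebarNat, h.not_ge]

theorem sum_smul_ebarNat_injective (η : Fin N → ℤ) :
    Function.Injective fun m : Fin N → ℕ => ∑ k, m k • ebarNat η k := by
  intro m n h
  funext j
  induction j using WellFoundedGT.induction with
  | _ j ih =>
  have hj : ∑ k, m k * ebarNat η k j = ∑ k, n k * ebarNat η k j := by
    simpa only [Finset.sum_apply, Pi.smul_apply, smul_eq_mul] using congrFun h j
  rw [← Finset.add_sum_erase _ _ (Finset.mem_univ j),
    ← Finset.add_sum_erase _ (fun k => n k * ebarNat η k j) (Finset.mem_univ j)] at hj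
  have hrest : ∑ k ∈ Finset.univ.erase j, m k * ebarNat η k j =
      ∑ k ∈ Finset.univ.erase j, n k * ebarNat η k j := by
    refine Finset.sum_congr rfl fun k hk => ?_
    rcases (Finset.ne_of_mem_erase hk).lt_or_gt with hkj | hjk
    · rw [ebarNat_of_lt η hkj, mul_zero, mul_zero]
    · rw [ih k hjk]
  simpa [hrest, ebarNat_self] using hj

theorem ebarNat_injective (η : Fin N → ℤ) : Function.Injective (ebarNat η) := by
  intro k l h
  rcases lt_trichotomy k l with hkl | hkl | hlk
  · exact absurd (congrFun h l) (by simp [ebarNat_of_lt η hkl, ebarNat_self])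
  · exact hkl
  · exact absurd (congrFun h k) (by simp [ebarNat_of_lt η hlk, ebarNat_self])

theorem ne_of_predIdx_eq_bot (h : predIdx η k = ⊥) (hl : l < k) : η l ≠ η k := fun he =>
  Finset.notMem_empty l (Finset.max_eq_bot.1 h ▸ Finset.mem_filter.2 ⟨Finset.mem_univ l, hl, he⟩)

theorem lt_and_eq_of_predIdx_eq_coe (h : predIdx η k = l) : l < k ∧ η l = η k := by
  simpa using Finset.mem_of_max h

theorem ne_of_predIdx_eq_coe (h : predIdx η k = l) {l' : Fin N} (hl : l < l') (hk : l' < k) :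
    η l' ≠ η k := fun he =>
  hl.not_ge (Finset.le_max_of_eq (by simp [hk, he]) h)

theorem ebarNat_of_predIdx_eq_bot (h : predIdx η k = ⊥) : ebarNat η k = Pi.single k 1 := by
  funext m
  rcases lt_trichotomy m k with hm | rfl | hm
  · simp [ebarNat, ne_of_predIdx_eq_bot h hm, hm.ne]
  · simp [ebarNat_self]
  · simp [ebarNat_of_lt η hm, hm.ne']

theorem ebarNat_of_predIdx_eq_coe (h : predIdx η k = l) :
    ebarNat η k = ebarNat η l + Pi.single k 1 := by
  obtain ⟨hlk, hη⟩ := lt_and_eq_of_predIdx_eq_coe h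
  funext m
  rw [Pi.add_apply]
  rcases lt_trichotomy m k with hm | rfl | hm
  · rcases le_or_gt m l with hml | hml
    · simp [ebarNat, hm.le, hm.ne, hml, hη]
    · simp [ebarNat, ne_of_predIdx_eq_coe h hml hm, hm.ne, hml.not_ge]
  · simp [ebarNat_self, ebarNat_of_lt η hlk]
  · simp [ebarNat_of_lt η hm, ebarNat_of_lt η (hlk.trans hm), hm.ne']

end Ebar

section Bicharacter

theorem Omega_natCast_mul_twist {K : Type u} [Field K] {N : ℕ} (lam2 : Fin N → Fin N → Kˣ)
    (f g : Fin N → ℕ) :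
    Omega K lam2 (fun k => (f k : ℤ)) (fun k => (g k : ℤ)) * twist lam2 g f =
      twist lam2 f g := by
  simp only [twist]
  rw [Finset.prod_comm, Omega, ← Finset.prod_mul_distrib]
  refine Finset.prod_congr rfl fun k _ => ?_
  rw [← Finset.prod_mul_distrib]
  refine Finset.prod_congr rfl fun l _ => ?_
  rw [omegaEntry, ← Nat.cast_mul, zpow_natCast, mul_comm (g l), ← mul_pow]
  rcases lt_trichotomy l k with h | rfl | h
  · simp [h, h.ne', h.not_gt]
  · simp
  · simp [h, h.ne, h.not_gt]

end Bicharacter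

section TorusAction

variable {K : Type u} [Field K] {R : Type v} [Ring R] [Algebra K R] {N r : ℕ}

theorem QNA.map_act_Rsub (Q : QNA K R N r) (ξ : Torus K r) (n : ℕ) :
    (Rsub K Q.x n).map (Q.act ξ).toAlgHom = Rsub K Q.x n := by
  have hle (ξ : Torus K r) : Rsub K Q.x n ≤ (Rsub K Q.x n).comap (Q.act ξ).toAlgHom := by
    refine Algebra.adjoin_le ?_
    rintro _ ⟨l, hl, rfl⟩
    obtain ⟨f, hf⟩ := Q.eigenvec l
    change Q.act ξ (Q.x l) ∈ Rsub K Q.x n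
    exact hf ξ ▸ Subalgebra.smul_mem _ (gen_mem_Rsub Q.x hl) _
  refine le_antisymm (Subalgebra.map_le.2 (hle ξ)) fun a ha =>
    Subalgebra.mem_map.2 ⟨Q.act ξ⁻¹ a, hle ξ⁻¹ ha, ?_⟩
  simp

theorem IsEigenWith.of_mul_eq_mul [NoZeroDivisors R] {act : Torus K r →* (R ≃ₐ[K] R)}
    {f g : Fin r → ℤ} {a b u : R} (hu : IsEigenWith K act f u) (hu0 : u ≠ 0)
    (ha : IsEigenWith K act g a) (h : u * a = b * u) : IsEigenWith K act g b := by
  intro ξ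
  have hact := congrArg (act ξ) h
  rw [map_mul, map_mul, hu ξ, ha ξ, smul_mul_assoc, mul_smul_comm, mul_smul_comm] at hact
  have hcancel := smul_right_injective R (Units.ne_zero (∏ i, ξ i ^ f i : Kˣ)) hact
  rw [h, ← smul_mul_assoc] at hcancel
  exact (mul_right_cancel₀ hu0 hcancel).symm

end TorusAction

section PrimeSequence

variable {K : Type u} [Field K] {R : Type v} [Ring R] [Algebra K R] {N r : ℕ}
  {Q : QNA K R N r} {lam2 : Fin N → Fin N → Kˣ} {η : Fin N → ℤ} {c y : Fin N → R} {k l : Fin N}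

namespace IsPrimeSeq

theorem isPrimeIn_Rsub (hseq : IsPrimeSeq K Q η c y) {n : ℕ} (hln : (l : ℕ) < n) (hn : n ≤ N)
    (hl : ∀ l' : Fin N, l < l' → (l' : ℕ) < n → η l' ≠ η l) :
    IsPrimeIn K (Rsub K Q.x n) (y l) := by
  obtain ⟨n, rfl⟩ := Nat.exists_eq_add_one_of_ne_zero (Nat.ne_zero_of_lt hln)
  exact ((hseq.prime_iff ⟨n, hn⟩ (y l)).2 ⟨l, Nat.le_of_lt_succ hln,
    fun l' h h' => hl l' h (Nat.lt_succ_of_le h'), 1, by simp⟩).1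

theorem isPrimeIn (hseq : IsPrimeSeq K Q η c y) (k : Fin N) :
    IsPrimeIn K (Rsub K Q.x ((k : ℕ) + 1)) (y k) :=
  hseq.isPrimeIn_Rsub (Nat.lt_succ_self _) k.is_lt fun _ h h' =>
    absurd (Nat.le_of_lt_succ h') h.not_ge

theorem isPrimeIn_Rsub_of_predIdx_eq_coe (hseq : IsPrimeSeq K Q η c y) (h : predIdx η k = l) :
    IsPrimeIn K (Rsub K Q.x k) (y l) := by
  obtain ⟨hlk, hη⟩ := lt_and_eq_of_predIdx_eq_coe h
  exact hseq.isPrimeIn_Rsub hlk k.is_lt.le fun _ hl' hk => hη ▸ ne_of_predIdx_eq_coe h hl' hk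

theorem isPrimeIn_succ_of_deltaZero (hseq : IsPrimeSeq K Q η c y) (hQ : Q.IsEigenMatrix lam2)
    (hδ : deltaZero K Q k) (h : IsPrimeIn K (Rsub K Q.x k) (y l)) :
    IsPrimeIn K (Rsub K Q.x ((k : ℕ) + 1)) (y l) := by
  obtain ⟨f, hf⟩ := hseq.homog l
  rw [Rsub_succ]
  exact h.adjoin (σ := (Q.act (Q.h k)).toAlgHom) (Q.act (Q.h k)).injective (Q.map_act_Rsub _ _)
    (hf (Q.h k)) (fun a ha => sub_eq_zero.1 (hδ a ha)) (hQ.linearIndependent_gen_pow k)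

-- If `p(k) = l`, then `y l` would stay prime after adjoining `x k`, although it is not in the list
-- of homogeneous primes at stage `k`.
theorem predIdx_eq_bot_of_deltaZero (hseq : IsPrimeSeq K Q η c y) (hQ : Q.IsEigenMatrix lam2)
    (hδ : deltaZero K Q k)
    (ih : ∀ l < k, ∃ d : K, d ≠ 0 ∧ HasLeadingTerm hQ.pbwBasis (y l) (toColex (ebarNat η l)) d) :
    predIdx η k = ⊥ := by
  refine WithBot.eq_bot_iff_forall_ne.2 fun l hp => ?_
  obtain ⟨hlk, hη⟩ := lt_and_eq_of_predIdx_eq_coe hp.symm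
  obtain ⟨m, hmk, hm, t, ht⟩ := (hseq.prime_iff k (y l)).1
    ⟨hseq.isPrimeIn_succ_of_deltaZero hQ hδ
      (hseq.isPrimeIn_Rsub_of_predIdx_eq_coe hp.symm), hseq.homog l⟩
  obtain ⟨d, hd, hlead⟩ := ih l hlk
  rcases hmk.lt_or_eq with hmk | rfl
  · obtain ⟨d', hd', hlead'⟩ := ih m hmk
    have hlm : l = m := ebarNat_injective η
      (hlead.exponent_unique hd (ht ▸ hlead'.smul (t : K)) (by simp [hd']))
    exact hm k hmk le_rfl (hlm ▸ hη.symm)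
  · have hlead' := (hQ.hasLeadingTerm_gen m).smul (t : K)
    rw [← hseq.rec_delta_zero m hδ, ← ht] at hlead'
    have hne := congrFun (hlead.exponent_unique hd hlead' (by simp)) m
    simp [ebarNat_of_lt η hlk] at hne

theorem exists_hasLeadingTerm (hseq : IsPrimeSeq K Q η c y) (hQ : Q.IsEigenMatrix lam2)
    (k : Fin N) :
    ∃ d : K, d ≠ 0 ∧ HasLeadingTerm hQ.pbwBasis (y k) (toColex (ebarNat η k)) d := by
  induction k using WellFoundedLT.induction with
  | _ k ih =>
  have hxk := hQ.hasLeadingTerm_gen k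
  by_cases hδ : deltaZero K Q k
  · rw [hseq.rec_delta_zero k hδ,
      ebarNat_of_predIdx_eq_bot (hseq.predIdx_eq_bot_of_deltaZero hQ hδ ih)]
    exact ⟨1, one_ne_zero, hxk⟩
  have hlower : -c k ∈ Submodule.span K (hQ.pbwBasis '' Set.Iio (toColex (ebarNat η k))) :=
    hQ.mem_span_Iio_of_mem_Rsub (neg_mem (hseq.c_mem k hδ)) (by simp [ebarNat_self])
  rw [hseq.rec_delta_ne k hδ, sub_eq_add_neg]
  rcases hp : predIdx η k with _ | l
  · rw [WithBot.none_eq_bot, WithBot.recBotCoe_bot, one_mul]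
    exact ⟨1, one_ne_zero, HasLeadingTerm.add_lower (ebarNat_of_predIdx_eq_bot hp ▸ hxk) hlower⟩
  · obtain ⟨d, hd, hl⟩ := ih l (lt_and_eq_of_predIdx_eq_coe hp).1
    have hlead := hQ.isMonomialBasis.hasLeadingTerm_mul hl hxk
    exact ⟨_, by simp [hd],
      HasLeadingTerm.add_lower (ebarNat_of_predIdx_eq_coe hp ▸ hlead) hlower⟩

theorem ne_zero (hseq : IsPrimeSeq K Q η c y) (k : Fin N) : y k ≠ 0 := (hseq.isPrimeIn k).2.1

theorem isPrimeIn_of_mul_eq_mul (hseq : IsPrimeSeq K Q η c y) (hQ : Q.IsEigenMatrix lam2)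
    (hlk : l < k) {b : R} (hb : y k * y l = b * y k) :
    IsPrimeIn K (Rsub K Q.x ((l : ℕ) + 1)) b := by
  have := hQ.isDomain
  have := hQ.isNoetherianRing_op
  obtain ⟨D, _, _, ι, hι⟩ := exists_isFractionEmb (K := K) (R := R)
  obtain ⟨-, hk, -, hleft, hright, -⟩ := hseq.isPrimeIn k
  have hmono := Rsub_mono (K := K) Q.x (Nat.succ_le_succ hlk.le)
  refine (hseq.isPrimeIn l).of_mul_eq_mul hι.1 hk (fun a ha => ?_) (fun a ha => ?_) hb
  · obtain ⟨a', -, e⟩ := hright a (hmono ha)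
    exact ⟨a', (hQ.mem_Rsub_iff_of_mul_eq_mul hk e).1 ha, e⟩
  · obtain ⟨a', -, e⟩ := hleft a (hmono ha)
    exact ⟨a', (hQ.mem_Rsub_iff_of_mul_eq_mul hk e.symm).2 ha, e⟩

-- Conjugation by `y k` permutes the homogeneous primes at stage `l` and preserves leading
-- exponents.
theorem quasiCommute_of_lt (hseq : IsPrimeSeq K Q η c y) (hQ : Q.IsEigenMatrix lam2)
    (hlk : l < k) : QuasiCommute K (y k) (y l) := by
  have := hQ.isDomain
  obtain ⟨b, -, hb⟩ := (hseq.isPrimeIn k).2.2.2.2.1 (y l)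
    (Rsub_mono Q.x (Nat.succ_le_succ hlk.le) (hseq.isPrimeIn l).1)
  have hhom : ∃ f, IsEigenWith K Q.act f b := by
    obtain ⟨f, hf⟩ := hseq.homog k
    obtain ⟨g, hg⟩ := hseq.homog l
    exact ⟨g, hf.of_mul_eq_mul (hseq.ne_zero k) hg hb⟩
  obtain ⟨m, -, -, t, rfl⟩ :=
    (hseq.prime_iff l b).1 ⟨hseq.isPrimeIn_of_mul_eq_mul hQ hlk hb, hhom⟩
  obtain ⟨dk, hdk, hk⟩ := hseq.exists_hasLeadingTerm hQ k
  obtain ⟨dl, hdl, hl⟩ := hseq.exists_hasLeadingTerm hQ l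
  obtain ⟨dm, hdm, hm⟩ := hseq.exists_hasLeadingTerm hQ m
  obtain rfl : l = m := ebarNat_injective η (hQ.isMonomialBasis.exponent_eq_of_mul_eq_mul
    hk hdk hl hdl (hm.smul (t : K)) (by simp [hdm]) hb)
  exact ⟨t, by rw [hb, smul_mul_assoc, Units.smul_def]⟩

theorem quasiCommute (hseq : IsPrimeSeq K Q η c y) (hQ : Q.IsEigenMatrix lam2) (k l : Fin N) :
    QuasiCommute K (y k) (y l) := by
  rcases lt_trichotomy l k with h | rfl | h
  · exact hseq.quasiCommute_of_lt hQ h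
  · exact ⟨1, (one_smul _ _).symm⟩
  · exact (hseq.quasiCommute_of_lt hQ h).symm

theorem mul_eq_Omega_smul_mul (hseq : IsPrimeSeq K Q η c y) (hQ : Q.IsEigenMatrix lam2)
    (k l : Fin N) :
    y k * y l = ((Omega K lam2 (ebar η k) (ebar η l) : Kˣ) : K) • (y l * y k) := by
  obtain ⟨t, ht⟩ := hseq.quasiCommute hQ k l
  rw [Units.smul_def] at ht
  obtain ⟨dk, hdk, hk⟩ := hseq.exists_hasLeadingTerm hQ k
  obtain ⟨dl, hdl, hl⟩ := hseq.exists_hasLeadingTerm hQ l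
  have hkl := hQ.isMonomialBasis.hasLeadingTerm_mul hk hl
  have hlk := (hQ.isMonomialBasis.hasLeadingTerm_mul hl hk).smul (t : K)
  rw [← ht, add_comm] at hlk
  have hcoeff := hkl.coeff_unique hlk
  simp only [ofColex_toColex] at hcoeff
  have htwist : twist lam2 (ebarNat η k) (ebarNat η l) =
      t * twist lam2 (ebarNat η l) (ebarNat η k) := by
    refine Units.ext (mul_left_cancel₀ (mul_ne_zero hdk hdl) ?_)
    rw [Units.val_mul]
    linear_combination hcoeff
  rw [← Omega_natCast_mul_twist, mul_left_inj] at htwist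
  rw [ebar_eq_natCast_ebarNat, ebar_eq_natCast_ebarNat, htwist, ht]

theorem hasLeadingTerm_ordMonomial (hseq : IsPrimeSeq K Q η c y) (hQ : Q.IsEigenMatrix lam2)
    (m : Fin N → ℕ) :
    ∃ d : K, d ≠ 0 ∧
      HasLeadingTerm hQ.pbwBasis (ordMonomial y m) (toColex (∑ k, m k • ebarNat η k)) d := by
  induction m using exponent_induction with
  | zero =>
    refine ⟨1, one_ne_zero, ?_⟩
    simpa [ordMonomial_zero] using hQ.hasLeadingTerm_ordMonomial 0
  | single_add k f hf ih =>
    obtain ⟨d, hd, hk⟩ := hseq.exists_hasLeadingTerm hQ k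
    obtain ⟨d', hd', hf'⟩ := ih
    have hsum : ∑ i, (Pi.single k 1 + f : Fin N → ℕ) i • ebarNat η i =
        ebarNat η k + ∑ i, f i • ebarNat η i := by
      simp [add_smul, Finset.sum_add_distrib, Pi.single_apply]
    rw [← gen_mul_ordMonomial y hf, hsum]
    exact ⟨_, by simp [hd, hd'], hQ.isMonomialBasis.hasLeadingTerm_mul hk hf'⟩

theorem linearIndependent_ordMonomial (hseq : IsPrimeSeq K Q η c y)
    (hQ : Q.IsEigenMatrix lam2) : LinearIndependent K (ordMonomial y) := by
  choose d hd hlead using hseq.hasLeadingTerm_ordMonomial hQ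
  exact linearIndependent_of_hasLeadingTerm
    (toColex.injective.comp (sum_smul_ebarNat_injective η)) hd hlead

end IsPrimeSeq

end PrimeSequence

/-- **The embedded quantum torus.**
For a quantum nilpotent algebra `R` of dimension `N` with eigenvalues `λ_{kl}` (given by
`h_k · x_l = λ_{kl} x_l` for `l < k`), bicharacter `Ω` and vectors `ē_k`, and the
canonical sequence `y_1, …, y_N` of homogeneous prime elements, the assignment
`Y_k^{±1} ↦ y_k^{±1}` defines a `K`-algebra embedding of the quantum torus `T_q`,
`q_{kl} = Ω(ē_k, ē_l)`, into the division ring of fractions `Fract R`:  in `Fract R` the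
(invertible) elements `y_k` satisfy the quantum torus commutation relations
`y_k y_l = q_{kl} y_l y_k`, and the Laurent monomials `y_1^{f_1} ⋯ y_N^{f_N}`, `f ∈ ℤ^N`,
are linearly independent over `K`. -/
theorem quantum_torus_embedding
    {K : Type u} [Field K] {R : Type v} [Ring R] [Algebra K R] {N r : ℕ}
    (Q : QNA K R N r)
    (lam2 : Fin N → Fin N → Kˣ)
    (hlam2 : ∀ k l : Fin N, l < k → Q.act (Q.h k) (Q.x l) = ((lam2 k l : Kˣ) : K) • Q.x l)
    (η : Fin N → ℤ) (c y : Fin N → R) (hseq : IsPrimeSeq K Q η c y) :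
    ∃ (D : Type v) (_ : DivisionRing D) (_ : Algebra K D) (ι : R →ₐ[K] D),
      IsFractionEmb K ι ∧
      (∀ k l : Fin N,
        ι (y k) * ι (y l) =
          ((Omega K lam2 (ebar η k) (ebar η l) : Kˣ) : K) • (ι (y l) * ι (y k))) ∧
      LinearIndependent K
        (fun f : Fin N → ℤ => ((List.finRange N).map fun k => (ι (y k)) ^ (f k)).prod) := by
  have hQ : Q.IsEigenMatrix lam2 := hlam2
  have := hQ.isDomain
  have := hQ.isNoetherianRing_op
  obtain ⟨D, _, _, ι, hι⟩ := exists_isFractionEmb (K := K) (R := R)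
  have hcomm (k l : Fin N) : ι (y k) * ι (y l) =
      ((Omega K lam2 (ebar η k) (ebar η l) : Kˣ) : K) • (ι (y l) * ι (y k)) := by
    rw [← map_mul, hseq.mul_eq_Omega_smul_mul hQ k l, map_smul, map_mul]
  have hli : LinearIndependent K (ordMonomial (ι ∘ y)) := by
    simpa only [Function.comp_def, AlgHom.toLinearMap_apply, map_ordMonomial] using
      (hseq.linearIndependent_ordMonomial hQ).map' ι.toLinearMap (LinearMap.ker_eq_bot.2 hι.1)
  exact ⟨D, inferInstance, inferInstance, ι, hι, hcomm, linearIndependent_laurentMonomial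
    (fun k => (map_ne_zero_iff ι hι.1).2 (hseq.ne_zero k)) (fun k l => ⟨_, hcomm k l⟩) hli⟩
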